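/- arXiv:2009.02712 — 2 statements merged into one kernel-verified Lean document; each statement's English description precedes it below -/
import Mathlib

section
/- Let 0 < ρ₀ < 1, λ₀ > 0, and set B₁ = 43, B₂ = 4.6. Suppose t₀ ≥ 2 satisfies t₀^{ρ₀} > (B₁/ρ₀ + B₂ ln t₀)/λ₀. Then for every d > 0 there exists a unique ρ ∈ [ρ₀, 1) such that E_ρ(−λ₀ t₀^ρ) = d if and only if e^{−λ₀ t₀} < d ≤ E_{ρ₀}(−λ₀ t₀^{ρ₀}). -/
/-
Substituting `p = q ^ 2` in Hankel's integral for `1 / Γ` turns the contour into a vertical line and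
gives, for `x > 0`, `E_ρ(-x) = π⁻¹ Re ∫ exp (q ^ 2) q⁻¹ V / (1 + V) dy` with `q = c + i y` and
`V = q ^ (2 * ρ) / x`. Writing `V / (1 + V) = V - V ^ 2 / (1 + V)` splits off the main term
`x⁻¹ / Γ(1 - ρ)`. Along `x = λ t ^ ρ` the `ρ`-derivative of the main term is at most
`-x⁻¹ ((1 + ρ) / 2 + (1 - ρ) log t)`, while that of the remainder is `O(x⁻² (1 + log t))` with an
explicit constant, obtained from Gaussian moments on the line `Re q = 1 / 2`. The former wins once
`x ≥ 43 + 4.6 log t`, so `ρ ↦ E_ρ(-λ t ^ ρ)` is strictly decreasing on `[ρ₀, 1]`, and the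
intermediate value theorem together with `E_1(z) = e ^ z` gives the claim.
-/

open Set Real

/-- The Mittag-Leffler function `E_ρ(z) = ∑_{k=0}^∞ z^k / Γ(ρk + 1)`. -/
noncomputable def mittagLeffler (ρ z : ℝ) : ℝ := ∑' k : ℕ, z ^ k / Real.Gamma (ρ * k + 1)

namespace MittagLeffler

open MeasureTheory Filter Topology
open Complex (I ne_zero_of_re_pos)
open scoped Complex Nat

lemma integrable_pow_mul_exp_neg_sq (n : ℕ) : Integrable fun y : ℝ => y ^ n * rexp (-y ^ 2) := by
  simpa [Real.rpow_natCast] using integrable_rpow_mul_exp_neg_mul_sq one_pos (s := n)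
    (by linarith [n.cast_nonneg (α := ℝ)])

lemma integral_pow_even_mul_exp_neg_sq (k : ℕ) :
    ∫ y : ℝ, y ^ (2 * k) * rexp (-y ^ 2) = √π * ((2 * k - 1)‼ / 2 ^ k) := by
  calc ∫ y : ℝ, y ^ (2 * k) * rexp (-y ^ 2)
      = 2 * ∫ y in Ioi (0 : ℝ), y ^ (2 * k) * rexp (-y ^ 2) := by
        rw [← integral_comp_abs]
        exact integral_congr_ae (.of_forall fun y => by simp only [pow_mul]; rw [sq_abs])
    _ = 2 * ∫ y in Ioi (0 : ℝ), y ^ ((2 * k : ℕ) : ℝ) * rexp (-y ^ (2 : ℝ)) := by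
        simp only [Real.rpow_natCast, Real.rpow_two]
    _ = Gamma (k + 1 / 2) := by
        rw [integral_rpow_mul_exp_neg_rpow two_pos (by linarith [(2 * k).cast_nonneg (α := ℝ)])]
        push_cast
        ring_nf
    _ = √π * ((2 * k - 1)‼ / 2 ^ k) := by rw [Real.Gamma_nat_add_half]; ring

/-- The even polynomial `∑ a k * y ^ (2 * k)` times the Gaussian `e^{-y²}`: the shape of all
majorants used for dominated convergence. -/
noncomputable def evenGaussian {n : ℕ} (a : Fin n → ℝ) (y : ℝ) : ℝ :=
  (∑ k, a k * y ^ (2 * (k : ℕ))) * rexp (-y ^ 2)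

section EvenGaussian

variable {n : ℕ} (a : Fin n → ℝ)

lemma evenGaussian_eq_sum (y : ℝ) :
    evenGaussian a y = ∑ k, a k * (y ^ (2 * (k : ℕ)) * rexp (-y ^ 2)) := by
  simp only [evenGaussian, Finset.sum_mul, mul_assoc]

lemma integrable_evenGaussian : Integrable (evenGaussian a) := by
  simp only [funext (evenGaussian_eq_sum a)]
  exact integrable_finsetSum _ fun k _ => (integrable_pow_mul_exp_neg_sq _).const_mul _

lemma integral_evenGaussian :
    ∫ y, evenGaussian a y = √π * ∑ k, a k * ((2 * (k : ℕ) - 1)‼ / 2 ^ (k : ℕ)) := by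
  simp only [evenGaussian_eq_sum]
  rw [integral_finsetSum _ fun k _ => (integrable_pow_mul_exp_neg_sq _).const_mul _,
    Finset.mul_sum]
  refine Finset.sum_congr rfl fun k _ => ?_
  rw [integral_const_mul, integral_pow_even_mul_exp_neg_sq]
  ring

lemma tendsto_evenGaussian_cocompact : Tendsto (evenGaussian a) (cocompact ℝ) (𝓝 0) := by
  have hpow : ∀ k : ℕ, Tendsto (fun y : ℝ => y ^ (2 * k) * rexp (-y ^ 2)) (cocompact ℝ) (𝓝 0) := by
    intro k
    have := tendsto_rpow_abs_mul_exp_neg_mul_sq_cocompact one_pos ((2 * k : ℕ) : ℝ)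
    simpa only [Real.rpow_natCast, (even_two_mul k).pow_abs, neg_one_mul] using this
  simp only [funext (evenGaussian_eq_sum a)]
  simpa using tendsto_finsetSum Finset.univ fun (k : Fin n) _ => (hpow k).const_mul (a k)

end EvenGaussian

/-- The point `c + iy` of the vertical line `Re q = c`, along which all contour integrals run. -/
noncomputable def vertLine (c y : ℝ) : ℂ := c + y * I

@[simp] lemma re_vertLine (c y : ℝ) : (vertLine c y).re = c := by simp [vertLine]

@[simp] lemma im_vertLine (c y : ℝ) : (vertLine c y).im = y := by simp [vertLine]

@[fun_prop]
lemma continuous_vertLine (c : ℝ) : Continuous (vertLine c) := by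
  unfold vertLine
  fun_prop

lemma hasDerivAt_vertLine (c y : ℝ) : HasDerivAt (vertLine c) I y := by
  have := ((hasDerivAt_id y).ofReal_comp.mul_const I).const_add (c : ℂ)
  rwa [Complex.ofReal_one, one_mul] at this

/-- Cauchy's theorem on the rectangles `[c₁, c₂] × [-T, T]` as `T → ∞`. -/
lemma integral_vertLine_eq_of_norm_le {E : Type*} [NormedAddCommGroup E] [NormedSpace ℂ E]
    [CompleteSpace E] {h : ℂ → E} {g : ℝ → ℝ} {c₁ c₂ : ℝ} (hc : c₁ ≤ c₂)
    (hd : DifferentiableOn ℂ h {z | z.re ∈ Icc c₁ c₂})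
    (hg : Integrable g) (hg₀ : Tendsto g (cocompact ℝ) (𝓝 0))
    (hb : ∀ σ ∈ Icc c₁ c₂, ∀ y, ‖h (vertLine σ y)‖ ≤ g y) :
    ∫ y, h (vertLine c₁ y) = ∫ y, h (vertLine c₂ y) := by
  have tendsto_line : ∀ σ ∈ Icc c₁ c₂, Tendsto (fun T : ℝ => ∫ y in -T..T, h (vertLine σ y))
      atTop (𝓝 (∫ y, h (vertLine σ y))) := by
    refine fun σ hσ => intervalIntegral_tendsto_integral (hg.mono' ?_ (.of_forall (hb σ hσ)))
      tendsto_neg_atTop_atBot tendsto_id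
    exact (hd.continuousOn.comp_continuous (continuous_vertLine σ) fun y =>
      by simpa using hσ).aestronglyMeasurable
  have norm_edge : ∀ T : ℝ, ‖∫ x in c₁..c₂, h (vertLine x T)‖ ≤ g T * |c₂ - c₁| := fun T =>
    intervalIntegral.norm_integral_le_of_norm_le_const fun x hx => by
      rw [uIoc_of_le hc] at hx
      exact hb x ⟨hx.1.le, hx.2⟩ T
  have cauchy : ∀ T : ℝ,
      I • ((∫ y in -T..T, h (vertLine c₂ y)) - ∫ y in -T..T, h (vertLine c₁ y))
        = (∫ x in c₁..c₂, h (vertLine x T)) - ∫ x in c₁..c₂, h (vertLine x (-T)) := by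
    intro T
    have rect := Complex.integral_boundary_rect_eq_zero_of_differentiableOn h
      (vertLine c₁ (-T)) (vertLine c₂ T) (hd.mono fun z hz => by
        have := hz.1
        rwa [re_vertLine, re_vertLine, uIcc_of_le hc] at this)
    simp only [re_vertLine, im_vertLine, ← vertLine.eq_1] at rect
    linear_combination (norm := module) rect
  have tendsto_edges : Tendsto (fun T : ℝ => (g T + g (-T)) * |c₂ - c₁|) atTop (𝓝 0) := by
    have htop := hg₀.mono_left atTop_le_cocompact
    have hbot := (hg₀.mono_left atBot_le_cocompact).comp tendsto_neg_atTop_atBot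
    simpa using (htop.add hbot).mul_const |c₂ - c₁|
  have tendsto_diff : Tendsto (fun T : ℝ => (∫ y in -T..T, h (vertLine c₂ y))
      - ∫ y in -T..T, h (vertLine c₁ y)) atTop (𝓝 0) := by
    refine squeeze_zero_norm (fun T => ?_) tendsto_edges
    rw [← one_mul ‖_‖, ← Complex.norm_I, ← norm_smul, cauchy, add_mul]
    exact (norm_sub_le _ _).trans (add_le_add (norm_edge T) (norm_edge (-T)))
  exact (sub_eq_zero.1 (tendsto_nhds_unique
    ((tendsto_line c₂ ⟨hc, le_rfl⟩).sub (tendsto_line c₁ ⟨le_rfl, hc⟩)) tendsto_diff)).symm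

section LaplaceTransform

variable {b : ℝ} {r : ℂ}

lemma integrableOn_rpow_mul_exp_neg_mul_Ioi {s : ℝ} (hb : 0 < b) (hs : 0 < s) :
    IntegrableOn (fun τ : ℝ => τ ^ (b - 1) * rexp (-(s * τ))) (Ioi 0) := by
  simpa only [Real.rpow_one, neg_mul] using
    integrableOn_rpow_mul_exp_neg_mul_rpow (by linarith : -1 < b - 1) one_pos hs

lemma norm_rpow_mul_cexp_neg_mul {τ : ℝ} (hτ : 0 ≤ τ) :
    ‖((τ ^ (b - 1) : ℝ) : ℂ) * cexp (-(r * τ))‖ = τ ^ (b - 1) * rexp (-(r.re * τ)) := by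
  rw [norm_mul, Complex.norm_exp, Complex.norm_real, Real.norm_of_nonneg (by positivity)]
  simp

lemma integrableOn_rpow_mul_cexp_neg_mul_Ioi (hb : 0 < b) (hr : 0 < r.re) :
    IntegrableOn (fun τ : ℝ => ((τ ^ (b - 1) : ℝ) : ℂ) * cexp (-(r * τ))) (Ioi 0) := by
  refine (integrableOn_rpow_mul_exp_neg_mul_Ioi hb hr).mono' (by fun_prop) ?_
  filter_upwards [ae_restrict_mem measurableSet_Ioi] with τ hτ
  rw [norm_rpow_mul_cexp_neg_mul (le_of_lt hτ)]

lemma differentiableOn_integral_rpow_mul_cexp_neg_mul_Ioi (hb : 0 < b) :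
    DifferentiableOn ℂ
      (fun r : ℂ => ∫ τ in Ioi (0 : ℝ), ((τ ^ (b - 1) : ℝ) : ℂ) * cexp (-(r * τ)))
      {r | 0 < r.re} := by
  intro z (hz : 0 < z.re)
  have hs : {w : ℂ | z.re / 2 < w.re} ∈ 𝓝 z :=
    (isOpen_lt continuous_const Complex.continuous_re).mem_nhds (half_lt_self hz)
  refine (hasDerivAt_integral_of_dominated_loc_of_deriv_le (𝕜 := ℂ)
    (F' := fun r τ => ((τ ^ (b - 1) : ℝ) : ℂ) * (cexp (-(r * τ)) * (-τ)))
    (bound := fun τ => τ ^ ((b + 1) - 1) * rexp (-(z.re / 2 * τ)))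
    hs (.of_forall fun r => by fun_prop) (integrableOn_rpow_mul_cexp_neg_mul_Ioi hb hz).integrable
    (by fun_prop) ?_ (integrableOn_rpow_mul_exp_neg_mul_Ioi (by linarith) (half_pos hz))
    ?_).2.differentiableAt.differentiableWithinAt
  · filter_upwards [ae_restrict_mem measurableSet_Ioi] with τ (hτ : 0 < τ) w (hw : z.re / 2 < w.re)
    rw [← mul_assoc, norm_mul, norm_rpow_mul_cexp_neg_mul hτ.le, norm_neg, Complex.norm_real,
      Real.norm_of_nonneg hτ.le, mul_right_comm, ← Real.rpow_add_one hτ.ne', sub_add_eq_add_sub]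
    gcongr
  · refine .of_forall fun τ w _ => HasDerivAt.const_mul _ ?_
    exact (hasDerivAt_mul_const (τ : ℂ)).fun_neg.cexp

lemma integral_rpow_mul_cexp_neg_ofReal_mul_Ioi {x : ℝ} (hb : 0 < b) (hx : 0 < x) :
    ∫ τ in Ioi (0 : ℝ), ((τ ^ (b - 1) : ℝ) : ℂ) * cexp (-(x * τ))
      = Gamma b * (x : ℂ) ^ ((-b : ℝ) : ℂ) := by
  have hint := Real.integral_rpow_mul_exp_neg_mul_Ioi hb hx
  rw [one_div, Real.inv_rpow hx.le, ← Real.rpow_neg hx.le, mul_comm] at hint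
  rw [← Complex.ofReal_cpow hx.le, ← Complex.ofReal_mul, ← hint, ← integral_complex_ofReal]
  push_cast
  rfl

/-- Both sides are holomorphic in `r`, so it suffices to know the formula for real `r`. -/
lemma integral_rpow_mul_cexp_neg_mul_Ioi (hb : 0 < b) (hr : 0 < r.re) :
    ∫ τ in Ioi (0 : ℝ), ((τ ^ (b - 1) : ℝ) : ℂ) * cexp (-(r * τ))
      = Gamma b * r ^ ((-b : ℝ) : ℂ) := by
  have hopen : IsOpen {z : ℂ | 0 < z.re} := isOpen_lt continuous_const Complex.continuous_re
  have hpow : DifferentiableOn ℂ (fun z : ℂ => (Gamma b : ℂ) * z ^ ((-b : ℝ) : ℂ))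
      {z | 0 < z.re} := fun z hz =>
    ((differentiableAt_id.cpow_const (Or.inl hz)).const_mul _).differentiableWithinAt
  have hreal : Tendsto (fun x : ℝ => (x : ℂ)) (𝓝[>] 1) (𝓝[≠] ((1 : ℝ) : ℂ)) :=
    tendsto_nhdsWithin_of_tendsto_nhds_of_eventually_within _
      (Complex.continuous_ofReal.tendsto 1 |>.mono_left nhdsWithin_le_nhds) <| by
        filter_upwards [self_mem_nhdsWithin] with x (hx : 1 < x)
        simpa using hx.ne'
  have heq : ∀ᶠ x : ℝ in 𝓝[>] 1,
      ∫ τ in Ioi (0 : ℝ), ((τ ^ (b - 1) : ℝ) : ℂ) * cexp (-(x * τ))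
        = Gamma b * (x : ℂ) ^ ((-b : ℝ) : ℂ) := by
    filter_upwards [self_mem_nhdsWithin] with x (hx : 1 < x)
    exact integral_rpow_mul_cexp_neg_ofReal_mul_Ioi hb (one_pos.trans hx)
  exact ((differentiableOn_integral_rpow_mul_cexp_neg_mul_Ioi hb).analyticOnNhd hopen)
    |>.eqOn_of_preconnected_of_frequently_eq (hpow.analyticOnNhd hopen)
      (convex_halfSpace_re_gt 0).isPreconnected (z₀ := ((1 : ℝ) : ℂ)) (by simp)
      (hreal.frequently heq.frequently) hr

end LaplaceTransform

lemma norm_cexp_sq (q : ℂ) : ‖cexp (q ^ 2)‖ = rexp (q.re ^ 2 - q.im ^ 2) := by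
  rw [Complex.norm_exp]
  simp [pow_two]

lemma norm_cexp_sq_vertLine (c y : ℝ) :
    ‖cexp (vertLine c y ^ 2)‖ = rexp (c ^ 2) * rexp (-y ^ 2) := by
  rw [norm_cexp_sq, re_vertLine, im_vertLine, ← Real.exp_add, sub_eq_add_neg]

lemma integral_cexp_vertLine_sq_mul_cexp_neg_mul (c τ : ℝ) :
    ∫ y, cexp (vertLine c y ^ 2) * cexp (-(vertLine c y * τ))
      = ((√π * rexp (-(1 / 4) * τ ^ 2) : ℝ) : ℂ) := by
  calc ∫ y, cexp (vertLine c y ^ 2) * cexp (-(vertLine c y * τ))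
      = ∫ y : ℝ, cexp (-1 * (y : ℂ) ^ 2 + (2 * c - τ) * I * y + (c ^ 2 - c * τ)) := by
        refine integral_congr_ae (.of_forall fun y => ?_)
        simp only [← Complex.exp_add, vertLine]
        congr 1
        linear_combination (y : ℂ) ^ 2 * Complex.I_sq
    _ = ((π : ℂ) / - -1) ^ (1 / 2 : ℂ)
          * cexp (c ^ 2 - c * τ - ((2 * c - τ) * I) ^ 2 / (4 * -1)) :=
        integral_cexp_quadratic (by simp) _ _
    _ = ((√π * rexp (-(1 / 4) * τ ^ 2) : ℝ) : ℂ) := by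
        rw [Real.sqrt_eq_rpow]
        push_cast [Complex.ofReal_cpow pi_pos.le]
        congr 1
        · norm_num
        · congr 1
          linear_combination (1 / 4 : ℂ) * (2 * c - τ) ^ 2 * Complex.I_sq

section HankelIntegral

variable {c : ℝ}

lemma continuous_vertLine_cpow (hc : 0 < c) (w : ℂ) : Continuous fun y => vertLine c y ^ w :=
  (continuous_vertLine c).cpow continuous_const fun y => Or.inl (by simpa using hc)

lemma norm_vertLine_cpow_le (hc : 0 < c) (a y : ℝ) :
    ‖vertLine c y ^ (a : ℂ)‖ ≤ c ^ a * rexp (|a| / c * (c + |y|)) := by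
  have hle : c ≤ ‖vertLine c y‖ := by simpa using Complex.re_le_norm (vertLine c y)
  have hone : 1 ≤ ‖vertLine c y‖ / c := (one_le_div hc).2 hle
  have hnorm : ‖vertLine c y‖ ≤ c + |y| := by
    simpa [abs_of_pos hc] using Complex.norm_le_abs_re_add_abs_im (vertLine c y)
  rw [Complex.norm_cpow_real]
  calc ‖vertLine c y‖ ^ a = c ^ a * (‖vertLine c y‖ / c) ^ a := by
        rw [← Real.mul_rpow hc.le (by positivity), mul_div_cancel₀ _ hc.ne']
    _ ≤ c ^ a * (‖vertLine c y‖ / c) ^ |a| := by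
        gcongr
        exact le_abs_self a
    _ ≤ c ^ a * rexp (‖vertLine c y‖ / c) ^ |a| := by
        gcongr
        linarith [Real.add_one_le_exp (‖vertLine c y‖ / c)]
    _ = c ^ a * rexp (|a| / c * ‖vertLine c y‖) := by
        rw [← Real.exp_mul]
        ring_nf
    _ ≤ c ^ a * rexp (|a| / c * (c + |y|)) := by gcongr

lemma integrable_cexp_sq_mul_cpow (hc : 0 < c) (a : ℝ) :
    Integrable fun y => cexp (vertLine c y ^ 2) * vertLine c y ^ (a : ℂ) := by
  set m := |a| / c
  have hdom : Integrable fun y : ℝ =>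
      rexp (c ^ 2) * c ^ a * rexp (m * c + m ^ 2 / 2) * rexp (-(1 / 2) * y ^ 2) :=
    (integrable_exp_neg_mul_sq (by norm_num)).const_mul _
  refine hdom.mono' ?_ (.of_forall fun y => ?_)
  · have := continuous_vertLine_cpow hc a
    exact Continuous.aestronglyMeasurable (by fun_prop)
  rw [norm_mul, norm_cexp_sq_vertLine]
  calc rexp (c ^ 2) * rexp (-y ^ 2) * ‖vertLine c y ^ (a : ℂ)‖
      ≤ rexp (c ^ 2) * rexp (-y ^ 2) * (c ^ a * rexp (m * (c + |y|))) := by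
        gcongr
        exact norm_vertLine_cpow_le hc a y
    _ = rexp (c ^ 2) * c ^ a * rexp (-y ^ 2 + m * (c + |y|)) := by rw [Real.exp_add]; ring
    _ ≤ rexp (c ^ 2) * c ^ a * rexp (m * c + m ^ 2 / 2 + -(1 / 2) * y ^ 2) := by
        gcongr ?_ * rexp ?_
        nlinarith [sq_nonneg (m - |y|), sq_abs y]
    _ = rexp (c ^ 2) * c ^ a * rexp (m * c + m ^ 2 / 2) * rexp (-(1 / 2) * y ^ 2) := by
        rw [Real.exp_add]; ring

lemma integrable_prod_cexp_sq_mul_laplace {b : ℝ} (hb : 0 < b) (hc : 0 < c) :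
    Integrable (Function.uncurry fun y τ : ℝ => cexp (vertLine c y ^ 2) *
        (((τ ^ (b - 1) : ℝ) : ℂ) * cexp (-(vertLine c y * τ))))
      (volume.prod (volume.restrict (Ioi 0))) := by
  have hgauss : Integrable fun y : ℝ => rexp (c ^ 2) * rexp (-y ^ 2) := by
    simpa using (integrable_pow_mul_exp_neg_sq 0).const_mul (rexp (c ^ 2))
  refine (hgauss.mul_prod (integrableOn_rpow_mul_exp_neg_mul_Ioi hb hc)).mono'
    (Measurable.aestronglyMeasurable (by fun_prop)) ?_
  have hpos : ∀ᵐ z : ℝ × ℝ ∂(volume.prod (volume.restrict (Ioi 0))), z.2 ∈ Ioi 0 :=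
    Measure.quasiMeasurePreserving_snd.ae (ae_restrict_mem measurableSet_Ioi)
  filter_upwards [hpos] with ⟨y, τ⟩ (hτ : 0 < τ)
  rw [Function.uncurry_apply_pair, norm_mul, norm_cexp_sq_vertLine,
    norm_rpow_mul_cexp_neg_mul hτ.le, re_vertLine]

lemma sqrt_pi_mul_integral_rpow_mul_exp_neg_sq_div_four {b : ℝ} (hb : 0 < b) :
    √π * ∫ τ in Ioi (0 : ℝ), τ ^ (b - 1) * rexp (-(1 / 4) * τ ^ 2)
      = Gamma b * (π / Gamma ((b + 1) / 2)) := by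
  have duplication : Gamma (b / 2) * Gamma ((b + 1) / 2) = Gamma b * 2 ^ (1 - b) * √π := by
    have := Real.Gamma_mul_Gamma_add_half (b / 2)
    rwa [← add_div, mul_div_cancel₀ _ two_ne_zero] at this
  have hint := integral_rpow_mul_exp_neg_mul_rpow two_pos (by linarith : -1 < b - 1)
    (by norm_num : (0 : ℝ) < 1 / 4)
  have hpow : (1 / 4 : ℝ) ^ (-b / 2) = 2 ^ b := by
    rw [show (1 / 4 : ℝ) = 2 ^ (-2 : ℝ) by norm_num [Real.rpow_neg], ← Real.rpow_mul two_pos.le]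
    ring_nf
  simp only [Real.rpow_two, sub_add_cancel] at hint
  rw [hint, hpow, ← mul_div_assoc (Gamma b), eq_div_iff (Gamma_pos_of_pos (by linarith)).ne']
  calc √π * (2 ^ b * (1 / 2) * Gamma (b / 2)) * Gamma ((b + 1) / 2)
      = √π * 2 ^ b * (1 / 2) * (Gamma (b / 2) * Gamma ((b + 1) / 2)) := by ring
    _ = Gamma b * (√π * √π) * (1 / 2 * (2 ^ b * 2 ^ (1 - b))) := by rw [duplication]; ring
    _ = Gamma b * π := by
        rw [← Real.rpow_add two_pos, add_sub_cancel, Real.rpow_one, Real.mul_self_sqrt pi_pos.le]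
        ring

/-- Insert the Laplace integral for `q ^ (-b)` and exchange the two integrals. -/
lemma integral_cexp_sq_mul_cpow_neg {b : ℝ} (hb : 0 < b) (hc : 0 < c) :
    ∫ y, cexp (vertLine c y ^ 2) * vertLine c y ^ ((-b : ℝ) : ℂ)
      = ((π / Gamma ((b + 1) / 2) : ℝ) : ℂ) := by
  have hΓ : (Gamma b : ℂ) ≠ 0 := by exact_mod_cast (Gamma_pos_of_pos hb).ne'
  refine mul_left_cancel₀ hΓ ?_
  calc (Gamma b : ℂ) * ∫ y, cexp (vertLine c y ^ 2) * vertLine c y ^ ((-b : ℝ) : ℂ)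
      = ∫ y, ∫ τ in Ioi (0 : ℝ), cexp (vertLine c y ^ 2) *
          (((τ ^ (b - 1) : ℝ) : ℂ) * cexp (-(vertLine c y * τ))) := by
        rw [← integral_const_mul]
        refine integral_congr_ae (.of_forall fun y => ?_)
        simp only [integral_const_mul]
        rw [integral_rpow_mul_cexp_neg_mul_Ioi hb (by simpa using hc)]
        ring
    _ = ∫ τ in Ioi (0 : ℝ), ∫ y, cexp (vertLine c y ^ 2) *
          (((τ ^ (b - 1) : ℝ) : ℂ) * cexp (-(vertLine c y * τ))) :=
        integral_integral_swap (integrable_prod_cexp_sq_mul_laplace hb hc)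
    _ = ∫ τ in Ioi (0 : ℝ), ((√π * (τ ^ (b - 1) * rexp (-(1 / 4) * τ ^ 2)) : ℝ) : ℂ) := by
        simp only [mul_left_comm (cexp _), integral_const_mul,
          integral_cexp_vertLine_sq_mul_cexp_neg_mul, ← Complex.ofReal_mul, mul_left_comm √π]
    _ = Gamma b * ((π / Gamma ((b + 1) / 2) : ℝ) : ℂ) := by
        rw [integral_complex_ofReal, integral_const_mul,
          sqrt_pi_mul_integral_rpow_mul_exp_neg_sq_div_four hb, Complex.ofReal_mul]

/-- Integrate `d/dy (e^{q²} q^{a+1})`. -/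
lemma integral_cexp_sq_mul_cpow_add_two (hc : 0 < c) (a : ℝ) :
    ∫ y, cexp (vertLine c y ^ 2) * vertLine c y ^ ((a + 2 : ℝ) : ℂ)
      = ((-(a + 1) / 2 : ℝ) : ℂ) * ∫ y, cexp (vertLine c y ^ 2) * vertLine c y ^ (a : ℂ) := by
  have hderiv : ∀ y, HasDerivAt
      (fun y => cexp (vertLine c y ^ 2) * vertLine c y ^ ((a + 1 : ℝ) : ℂ))
      (2 * I * (cexp (vertLine c y ^ 2) * vertLine c y ^ ((a + 2 : ℝ) : ℂ))
        + (a + 1) * I * (cexp (vertLine c y ^ 2) * vertLine c y ^ (a : ℂ))) y := by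
    intro y
    have hq : 0 < (vertLine c y).re := by simpa using hc
    have hpow := (hasDerivAt_id (vertLine c y)).cpow_const (c := ((a + 1 : ℝ) : ℂ)) (Or.inl hq)
    have hcomp := (((hasDerivAt_id (vertLine c y)).pow 2).cexp.mul hpow).scomp y
      (hasDerivAt_vertLine c y)
    refine hcomp.congr_deriv ?_
    have h₁ : vertLine c y ^ ((a + 1 : ℝ) : ℂ) = vertLine c y ^ (a : ℂ) * vertLine c y := by
      rw [Complex.ofReal_add, Complex.ofReal_one, Complex.cpow_add _ _ (ne_zero_of_re_pos hq),
        Complex.cpow_one]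
    have h₂ : vertLine c y ^ ((a + 2 : ℝ) : ℂ) = vertLine c y ^ (a : ℂ) * vertLine c y ^ 2 := by
      rw [Complex.ofReal_add, Complex.cpow_add _ _ (ne_zero_of_re_pos hq), Complex.ofReal_ofNat,
        Complex.cpow_ofNat]
    rw [h₂, smul_eq_mul]
    simp only [id_eq, Pi.pow_apply, h₁]
    push_cast
    ring_nf
  have hint := integrable_cexp_sq_mul_cpow hc
  have hzero := integral_eq_zero_of_hasDerivAt_of_integrable hderiv
    (((hint (a + 2)).const_mul _).add ((hint a).const_mul _)) (hint (a + 1))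
  rw [integral_add ((hint (a + 2)).const_mul _) ((hint a).const_mul _), integral_const_mul,
    integral_const_mul] at hzero
  push_cast at hzero ⊢
  refine mul_left_cancel₀ (mul_ne_zero two_ne_zero Complex.I_ne_zero) ?_
  linear_combination hzero

/-- At the poles of `Γ` both sides vanish, since then `π / Γ = π / 0 = 0`. -/
lemma integral_cexp_sq_mul_cpow (hc : 0 < c) (a : ℝ) :
    ∫ y, cexp (vertLine c y ^ 2) * vertLine c y ^ (a : ℂ)
      = ((π / Gamma ((1 - a) / 2) : ℝ) : ℂ) := by
  obtain ⟨n, hn⟩ := exists_nat_gt (a / 2)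
  induction n generalizing a with
  | zero =>
    have := integral_cexp_sq_mul_cpow_neg (b := -a) (by push_cast at hn; linarith) hc
    rwa [neg_neg, neg_add_eq_sub] at this
  | succ n ih =>
    have := integral_cexp_sq_mul_cpow_add_two hc (a - 2)
    rw [ih (a - 2) (by push_cast at hn; linarith), sub_add_cancel, ← Complex.ofReal_mul] at this
    rw [this, Complex.ofReal_inj, show (1 - (a - 2)) / 2 = (1 - a) / 2 + 1 by ring]
    rcases eq_or_ne ((1 - a) / 2) 0 with h | h
    · rw [h, Gamma_zero, show -(a - 2 + 1) / 2 = (1 - a) / 2 by ring, h]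
      simp
    · rw [Real.Gamma_add_one h, show -(a - 2 + 1) / 2 = (1 - a) / 2 by ring, mul_div_assoc',
        mul_div_mul_left _ _ h]

end HankelIntegral

/-- The quantity `q ^ (2ρ) / x`, i.e. `p ^ ρ / x` after the substitution `p = q²`; the resolvent
kernel `p ^ (ρ - 1) / (p ^ ρ + x)` of `E_ρ(-x)` is a function of it. -/
noncomputable def symbol (x ρ : ℝ) (q : ℂ) : ℂ := q ^ ((2 * ρ : ℝ) : ℂ) / x

section SymbolBounds

variable {x ρ : ℝ} {q : ℂ}

lemma norm_symbol (hx : 0 ≤ x) : ‖symbol x ρ q‖ = ‖q‖ ^ (2 * ρ) / x := by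
  rw [symbol, norm_div, Complex.norm_cpow_real, Complex.norm_of_nonneg hx]

lemma differentiableAt_symbol (hq : 0 < q.re) : DifferentiableAt ℂ (symbol x ρ) q :=
  (differentiableAt_id.cpow_const (Or.inl hq)).div_const _

lemma norm_one_add_mul_cos_add_sin_sq (r θ : ℝ) :
    ‖1 + r * ((Real.cos θ : ℂ) + Real.sin θ * I)‖ ^ 2 = 1 + 2 * r * Real.cos θ + r ^ 2 := by
  rw [← Complex.normSq_eq_norm_sq, Complex.normSq_apply]
  simp only [Complex.add_re, Complex.add_im, Complex.mul_re, Complex.mul_im, Complex.one_re,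
    Complex.one_im, Complex.ofReal_re, Complex.ofReal_im, Complex.I_re, Complex.I_im]
  linear_combination r ^ 2 * Real.sin_sq_add_cos_sq θ

lemma min_one_one_add_cos_le {r : ℝ} (hr : 0 ≤ r) (θ : ℝ) :
    min 1 (1 + Real.cos θ) ≤ 1 + 2 * r * Real.cos θ + r ^ 2 := by
  rcases le_total 0 (Real.cos θ) with h | h
  · exact (min_le_left _ _).trans (by nlinarith [mul_nonneg hr h])
  · exact (min_le_right _ _).trans
      (by nlinarith [sq_nonneg (r + Real.cos θ), Real.neg_one_le_cos θ])

lemma two_mul_re_sq_div_norm_sq_le_one_add_cos (hρ₀ : 0 ≤ ρ) (hρ₁ : ρ ≤ 1) (hq : 0 < q.re) :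
    2 * q.re ^ 2 / ‖q‖ ^ 2 ≤ 1 + Real.cos (q.arg * (2 * ρ)) := by
  have harg : |q.arg| ≤ π / 2 := Complex.abs_arg_le_pi_div_two_iff.2 hq.le
  calc 2 * q.re ^ 2 / ‖q‖ ^ 2 = 1 + Real.cos (2 * |q.arg|) := by
        rw [Real.cos_two_mul, Real.cos_abs, Complex.cos_arg (ne_zero_of_re_pos hq)]
        ring
    _ ≤ 1 + Real.cos (|q.arg| * (2 * ρ)) := by
        gcongr 1 + ?_
        exact Real.cos_le_cos_of_nonneg_of_le_pi (by positivity) (by linarith)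
          (by nlinarith [abs_nonneg q.arg])
    _ = 1 + Real.cos (q.arg * (2 * ρ)) := by
        rw [← Real.cos_abs (q.arg * (2 * ρ)), abs_mul, abs_of_nonneg (by linarith : 0 ≤ 2 * ρ)]

/-- `q ^ (2ρ)` stays in the sector `|arg| ≤ 2 |arg q| < π`, so `symbol x ρ q` keeps away
from `-1`. -/
lemma min_le_norm_one_add_symbol_sq (hx : 0 ≤ x) (hρ₀ : 0 ≤ ρ) (hρ₁ : ρ ≤ 1) (hq : 0 < q.re) :
    min 1 (2 * q.re ^ 2 / ‖q‖ ^ 2) ≤ ‖1 + symbol x ρ q‖ ^ 2 := by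
  have hpolar : symbol x ρ q = ((‖q‖ ^ (2 * ρ) / x : ℝ) : ℂ) *
      ((Real.cos (q.arg * (2 * ρ)) : ℂ) + Real.sin (q.arg * (2 * ρ)) * I) := by
    rw [symbol, Complex.cpow_ofReal, Complex.ofReal_div, div_mul_eq_mul_div]
  rw [hpolar, norm_one_add_mul_cos_add_sin_sq]
  exact (min_le_min_left _ (two_mul_re_sq_div_norm_sq_le_one_add_cos hρ₀ hρ₁ hq)).trans
    (min_one_one_add_cos_le (by positivity) _)

lemma one_add_symbol_ne_zero (hx : 0 ≤ x) (hρ₀ : 0 ≤ ρ) (hρ₁ : ρ ≤ 1) (hq : 0 < q.re) :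
    1 + symbol x ρ q ≠ 0 := by
  have hq₀ : 0 < ‖q‖ := norm_pos_iff.2 (ne_zero_of_re_pos hq)
  have hpos : 0 < ‖1 + symbol x ρ q‖ ^ 2 :=
    (lt_min one_pos (by positivity)).trans_le (min_le_norm_one_add_symbol_sq hx hρ₀ hρ₁ hq)
  exact norm_ne_zero_iff.1 fun h => hpos.ne' (by rw [h, zero_pow two_ne_zero])

lemma norm_inv_one_add_symbol_sq_le (hx : 0 ≤ x) (hρ₀ : 0 ≤ ρ) (hρ₁ : ρ ≤ 1) (hq : 0 < q.re) :
    ‖(1 + symbol x ρ q)⁻¹‖ ^ 2 ≤ 1 + q.im ^ 2 / (2 * q.re ^ 2) := by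
  have hq₀ : 0 < ‖q‖ := norm_pos_iff.2 (ne_zero_of_re_pos hq)
  have hmin : 0 < min 1 (2 * q.re ^ 2 / ‖q‖ ^ 2) := lt_min one_pos (by positivity)
  have hnorm : ‖q‖ ^ 2 / (2 * q.re ^ 2) = 1 / 2 + q.im ^ 2 / (2 * q.re ^ 2) := by
    rw [← Complex.normSq_eq_norm_sq, Complex.normSq_apply]
    field_simp
  have him : 0 ≤ q.im ^ 2 / (2 * q.re ^ 2) := by positivity
  calc ‖(1 + symbol x ρ q)⁻¹‖ ^ 2 ≤ (min 1 (2 * q.re ^ 2 / ‖q‖ ^ 2))⁻¹ := by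
        rw [norm_inv, inv_pow]
        exact inv_anti₀ hmin (min_le_norm_one_add_symbol_sq hx hρ₀ hρ₁ hq)
    _ ≤ 1 + q.im ^ 2 / (2 * q.re ^ 2) := by
        rcases min_choice 1 (2 * q.re ^ 2 / ‖q‖ ^ 2) with h | h
        · rw [h]
          linarith
        · rw [h, inv_div]
          linarith

lemma norm_inv_one_add_symbol_le (hx : 0 ≤ x) (hρ₀ : 0 ≤ ρ) (hρ₁ : ρ ≤ 1) (hq : 0 < q.re) :
    ‖(1 + symbol x ρ q)⁻¹‖ ≤ 1 + q.im ^ 2 / (4 * q.re ^ 2) := by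
  have h := norm_inv_one_add_symbol_sq_le hx hρ₀ hρ₁ hq
  have hhalf : q.im ^ 2 / (2 * q.re ^ 2) = 2 * (q.im ^ 2 / (4 * q.re ^ 2)) := by ring
  rw [hhalf] at h
  nlinarith [sq_nonneg (‖(1 + symbol x ρ q)⁻¹‖ - 1)]

end SymbolBounds

/-- The integrand `e^{q²} q^{2ρ-1} / (q^{2ρ} + x)` of the Laplace inversion formula for `E_ρ(-x)`,
after the substitution `p = q²`. -/
noncomputable def kernel (x ρ : ℝ) (q : ℂ) : ℂ :=
  cexp (q ^ 2) * (q⁻¹ * (symbol x ρ q / (1 + symbol x ρ q)))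

section Representation

variable {x ρ : ℝ}

lemma norm_kernel_le {q : ℂ} (hx : 0 ≤ x) (hρ₀ : 0 ≤ ρ) (hρ₁ : ρ ≤ 1) (hq : 0 < q.re) :
    ‖kernel x ρ q‖
      ≤ rexp (q.re ^ 2 - q.im ^ 2) * (q.re⁻¹ * (2 + q.im ^ 2 / (4 * q.re ^ 2))) := by
  have hfrac : symbol x ρ q / (1 + symbol x ρ q) = 1 - (1 + symbol x ρ q)⁻¹ := by
    field [one_add_symbol_ne_zero hx hρ₀ hρ₁ hq]
  rw [kernel, norm_mul, norm_mul, norm_cexp_sq, norm_inv, hfrac]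
  gcongr
  · exact Complex.re_le_norm q
  · refine (norm_sub_le _ _).trans ?_
    rw [norm_one]
    linarith [norm_inv_one_add_symbol_le hx hρ₀ hρ₁ hq]

lemma norm_kernel_vertLine_le {c₁ c₂ σ : ℝ} (hx : 0 ≤ x) (hρ₀ : 0 ≤ ρ) (hρ₁ : ρ ≤ 1)
    (hc₁ : 0 < c₁) (hσ : σ ∈ Icc c₁ c₂) (y : ℝ) :
    ‖kernel x ρ (vertLine σ y)‖
      ≤ evenGaussian ![rexp (c₂ ^ 2) * c₁⁻¹ * 2, rexp (c₂ ^ 2) * c₁⁻¹ * (4 * c₁ ^ 2)⁻¹] y := by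
  have hσ₀ : 0 < σ := hc₁.trans_le hσ.1
  refine (norm_kernel_le hx hρ₀ hρ₁ (by simpa using hσ₀)).trans ?_
  rw [re_vertLine, im_vertLine]
  calc rexp (σ ^ 2 - y ^ 2) * (σ⁻¹ * (2 + y ^ 2 / (4 * σ ^ 2)))
      ≤ rexp (c₂ ^ 2 - y ^ 2) * (c₁⁻¹ * (2 + y ^ 2 / (4 * c₁ ^ 2))) := by
        gcongr
        exacts [hσ.2, hσ.1, hσ.1]
    _ = _ := by
        rw [sub_eq_add_neg, Real.exp_add]
        simp only [evenGaussian, Fin.sum_univ_two, Matrix.cons_val, Fin.coe_ofNat_eq_mod,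
          Nat.zero_mod, Nat.one_mod]
        ring

lemma differentiableAt_kernel {q : ℂ} (hx : 0 ≤ x) (hρ₀ : 0 ≤ ρ) (hρ₁ : ρ ≤ 1) (hq : 0 < q.re) :
    DifferentiableAt ℂ (kernel x ρ) q := by
  have hsymb := differentiableAt_symbol (x := x) (ρ := ρ) hq
  exact (differentiableAt_id.pow 2).cexp.mul ((differentiableAt_inv (ne_zero_of_re_pos hq)).mul
    (hsymb.div (hsymb.const_add 1) (one_add_symbol_ne_zero hx hρ₀ hρ₁ hq)))

lemma integral_kernel_vertLine_eq {c₁ c₂ : ℝ} (hx : 0 ≤ x) (hρ₀ : 0 ≤ ρ) (hρ₁ : ρ ≤ 1)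
    (hc₁ : 0 < c₁) (hc : c₁ ≤ c₂) :
    ∫ y, kernel x ρ (vertLine c₁ y) = ∫ y, kernel x ρ (vertLine c₂ y) :=
  integral_vertLine_eq_of_norm_le hc
    (fun _ hq => (differentiableAt_kernel hx hρ₀ hρ₁ (hc₁.trans_le hq.1)).differentiableWithinAt)
    (integrable_evenGaussian _) (tendsto_evenGaussian_cocompact _)
    fun _ hσ => norm_kernel_vertLine_le hx hρ₀ hρ₁ hc₁ hσ

/-- The `k`-th term of the expansion of `kernel x ρ q` in negative powers of `symbol x ρ q`. -/
noncomputable def kernelTerm (x ρ : ℝ) (k : ℕ) (q : ℂ) : ℂ :=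
  cexp (q ^ 2) * (q⁻¹ * (-(symbol x ρ q)⁻¹) ^ k)

lemma hasSum_kernelTerm {q : ℂ} (h : 1 < ‖symbol x ρ q‖) :
    HasSum (fun k => kernelTerm x ρ k q) (kernel x ρ q) := by
  have hgeom := hasSum_geometric_of_norm_lt_one (ξ := -(symbol x ρ q)⁻¹)
    (by rw [norm_neg, norm_inv]; exact inv_lt_one_of_one_lt₀ h)
  have hS : symbol x ρ q ≠ 0 := norm_pos_iff.1 (one_pos.trans h)
  have hfrac : (1 - -(symbol x ρ q)⁻¹)⁻¹ = symbol x ρ q / (1 + symbol x ρ q) := by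
    rw [sub_neg_eq_add, show 1 + (symbol x ρ q)⁻¹ = (1 + symbol x ρ q) / symbol x ρ q by
      field_simp; ring, inv_div]
  rw [hfrac] at hgeom
  exact (hgeom.mul_left _).mul_left _

lemma norm_kernelTerm_le {q : ℂ} (h : 2 ≤ ‖symbol x ρ q‖) (k : ℕ) :
    ‖kernelTerm x ρ k q‖ ≤ (1 / 2) ^ k * ‖kernelTerm x ρ 0 q‖ := by
  have hinv : ‖symbol x ρ q‖⁻¹ ≤ 1 / 2 := by
    rw [one_div]
    exact inv_anti₀ two_pos h
  calc ‖kernelTerm x ρ k q‖ = ‖symbol x ρ q‖⁻¹ ^ k * ‖kernelTerm x ρ 0 q‖ := by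
        simp only [kernelTerm, norm_mul, norm_pow, norm_neg, norm_inv, pow_zero, norm_one]
        ring
    _ ≤ (1 / 2) ^ k * ‖kernelTerm x ρ 0 q‖ := by gcongr

lemma kernelTerm_eq {q : ℂ} (hq : q ≠ 0) (k : ℕ) :
    kernelTerm x ρ k q
      = (-x : ℂ) ^ k * (cexp (q ^ 2) * q ^ ((-(2 * ρ * k + 1) : ℝ) : ℂ)) := by
  have hpow : q ^ ((-(2 * ρ * k + 1) : ℝ) : ℂ) = q⁻¹ * ((q ^ ((2 * ρ : ℝ) : ℂ))⁻¹) ^ k := by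
    have hexp : ((-(2 * ρ * k + 1) : ℝ) : ℂ) = -1 + -(k * ((2 * ρ : ℝ) : ℂ)) := by
      push_cast
      ring
    rw [hexp, Complex.cpow_add _ _ hq, Complex.cpow_neg_one, Complex.cpow_neg,
      Complex.cpow_nat_mul, inv_pow]
  rw [kernelTerm, hpow, symbol, inv_div, div_eq_mul_inv, ← neg_mul, mul_pow]
  ring

lemma integrable_kernelTerm {c : ℝ} (hc : 0 < c) (k : ℕ) :
    Integrable fun y => kernelTerm x ρ k (vertLine c y) := by
  simp only [kernelTerm_eq (ne_zero_of_re_pos (s := vertLine c _) (by simpa using hc))]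
  exact (integrable_cexp_sq_mul_cpow hc _).const_mul _

lemma integral_kernelTerm {c : ℝ} (hc : 0 < c) (k : ℕ) :
    ∫ y, kernelTerm x ρ k (vertLine c y) = ((π * ((-x) ^ k / Gamma (ρ * k + 1)) : ℝ) : ℂ) := by
  simp only [kernelTerm_eq (ne_zero_of_re_pos (s := vertLine c _) (by simpa using hc))]
  rw [integral_const_mul, integral_cexp_sq_mul_cpow hc,
    show (1 - -(2 * ρ * k + 1)) / 2 = ρ * k + 1 by ring]
  push_cast
  ring

lemma integral_kernel_vertLine_of_two_mul_le {c : ℝ} (hx : 0 < x) (hρ : 0 ≤ ρ) (hc : 0 < c)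
    (h : 2 * x ≤ c ^ (2 * ρ)) :
    ∫ y, kernel x ρ (vertLine c y) = ((π * mittagLeffler ρ (-x) : ℝ) : ℂ) := by
  have hsymb (y : ℝ) : 2 ≤ ‖symbol x ρ (vertLine c y)‖ := by
    rw [norm_symbol hx.le, le_div_iff₀ hx]
    refine h.trans (Real.rpow_le_rpow hc.le ?_ (by positivity))
    simpa using Complex.re_le_norm (vertLine c y)
  have hsummable : Summable fun k => ∫ y, ‖kernelTerm x ρ k (vertLine c y)‖ := by
    refine Summable.of_nonneg_of_le (fun k => integral_nonneg fun y => norm_nonneg _) (fun k => ?_)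
      (summable_geometric_two.mul_right (∫ y, ‖kernelTerm x ρ 0 (vertLine c y)‖))
    rw [← integral_const_mul]
    exact integral_mono (integrable_kernelTerm hc k).norm
      ((integrable_kernelTerm hc 0).norm.const_mul _) fun y => norm_kernelTerm_le (hsymb y) k
  have hsum := hasSum_integral_of_summable_integral_norm
    (fun k => integrable_kernelTerm (x := x) (ρ := ρ) hc k) hsummable
  simp only [integral_kernelTerm hc,
    (hasSum_kernelTerm (one_lt_two.trans_le (hsymb _))).tsum_eq] at hsum
  rw [← hsum.tsum_eq, ← Complex.ofReal_tsum, tsum_mul_left, mittagLeffler]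

theorem integral_kernel_vertLine {c : ℝ} (hx : 0 < x) (hρ₀ : 0 < ρ) (hρ₁ : ρ ≤ 1) (hc : 0 < c) :
    ∫ y, kernel x ρ (vertLine c y) = ((π * mittagLeffler ρ (-x) : ℝ) : ℂ) := by
  have hle : c ≤ max c ((2 * x) ^ (2 * ρ)⁻¹) := le_max_left _ _
  rw [integral_kernel_vertLine_eq hx.le hρ₀.le hρ₁ hc hle]
  refine integral_kernel_vertLine_of_two_mul_le hx hρ₀.le (hc.trans_le hle) ?_
  calc 2 * x = ((2 * x) ^ (2 * ρ)⁻¹) ^ (2 * ρ) :=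
        (Real.rpow_inv_rpow (by positivity) (by positivity)).symm
    _ ≤ (max c ((2 * x) ^ (2 * ρ)⁻¹)) ^ (2 * ρ) := by gcongr; exact le_max_right _ _

end Representation

section GammaBounds

variable {u : ℝ}

lemma differentiableAt_Gamma_of_pos (hu : 0 < u) : DifferentiableAt ℝ Gamma u :=
  Real.differentiableAt_Gamma fun m => ne_of_gt (hu.trans_le' (by simp))

/-- `Γ` is log-convex, so `Γ' / Γ` is at most its value `1 - γ < 1 / 2` at `2`. -/
lemma deriv_Gamma_le_half_mul_Gamma (hu₀ : 0 < u) (hu₂ : u ≤ 2) :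
    deriv Gamma u ≤ Gamma u / 2 := by
  have hderiv (v : ℝ) (hv : 0 < v) :
      HasDerivAt (Real.log ∘ Gamma) (deriv Gamma v / Gamma v) v :=
    (differentiableAt_Gamma_of_pos hv).hasDerivAt.log (Real.Gamma_pos_of_pos hv).ne'
  have hmono := Real.convexOn_log_Gamma.monotoneOn_deriv
    fun v hv => (hderiv v hv).differentiableAt
  have hle := hmono (mem_Ioi.2 hu₀) (mem_Ioi.2 two_pos) hu₂
  have htwo : deriv Gamma 2 = 1 - eulerMascheroniConstant := by
    have h := Real.deriv_Gamma_nat 1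
    simp only [harmonic, Finset.sum_range_one, Nat.factorial_one, Nat.cast_one,
      zero_add, inv_one, Rat.cast_one, one_mul, one_add_one_eq_two] at h
    linarith
  rw [(hderiv u hu₀).deriv, (hderiv 2 two_pos).deriv, Real.Gamma_two, div_one, htwo,
    div_le_iff₀ (Real.Gamma_pos_of_pos hu₀)] at hle
  nlinarith [Real.one_half_lt_eulerMascheroniConstant, Real.Gamma_pos_of_pos hu₀]

lemma Gamma_le_one (hu₁ : 1 ≤ u) (hu₂ : u ≤ 2) : Gamma u ≤ 1 := by
  have h := Real.convexOn_Gamma.2 (mem_Ioi.2 one_pos) (mem_Ioi.2 two_pos)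
    (sub_nonneg.2 hu₂) (sub_nonneg.2 hu₁) (by ring)
  have hcomb : (2 - u) * 1 + (u - 1) * 2 = u := by ring
  simp only [smul_eq_mul, Real.Gamma_one, Real.Gamma_two, hcomb] at h
  linarith

lemma inv_Gamma_eq_div (u : ℝ) : (Gamma u)⁻¹ = u / Gamma (u + 1) := by
  rcases eq_or_ne u 0 with rfl | hu
  · simp
  · rw [Real.Gamma_add_one hu, div_mul_cancel_left₀ hu]

lemma self_le_inv_Gamma (hu₀ : 0 ≤ u) (hu₁ : u ≤ 1) : u ≤ (Gamma u)⁻¹ := by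
  rw [inv_Gamma_eq_div]
  exact le_div_self hu₀ (Real.Gamma_pos_of_pos (by linarith))
    (Gamma_le_one (by linarith) (by linarith))

lemma hasDerivAt_inv_Gamma (hu : 0 < u) :
    HasDerivAt (fun v => (Gamma v)⁻¹)
      ((Gamma (u + 1) - u * deriv Gamma (u + 1)) / Gamma (u + 1) ^ 2) u := by
  have hu' : 0 < u + 1 := by linarith
  have hG := (differentiableAt_Gamma_of_pos hu').hasDerivAt.comp_add_const u 1
  simp only [inv_Gamma_eq_div]
  exact ((hasDerivAt_id' u).fun_div hG (Real.Gamma_pos_of_pos hu').ne').congr_deriv (by ring)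

lemma one_sub_half_le_deriv_inv_Gamma (hu₀ : 0 < u) (hu₁ : u ≤ 1) :
    1 - u / 2 ≤ deriv (fun v => (Gamma v)⁻¹) u := by
  have hG : 0 < Gamma (u + 1) := Real.Gamma_pos_of_pos (by linarith)
  have hG₁ : Gamma (u + 1) ≤ 1 := Gamma_le_one (by linarith) (by linarith)
  have hG' : deriv Gamma (u + 1) ≤ Gamma (u + 1) / 2 :=
    deriv_Gamma_le_half_mul_Gamma (by linarith) (by linarith)
  rw [(hasDerivAt_inv_Gamma hu₀).deriv]
  calc 1 - u / 2 ≤ (1 - u / 2) / Gamma (u + 1) := le_div_self (by linarith) hG hG₁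
    _ = (Gamma (u + 1) - u * (Gamma (u + 1) / 2)) / Gamma (u + 1) ^ 2 := by field
    _ ≤ (Gamma (u + 1) - u * deriv Gamma (u + 1)) / Gamma (u + 1) ^ 2 := by gcongr

end GammaBounds

/-- The leading term `x⁻¹ / Γ(1 - ρ)` of `E_ρ(-x)` as `x → ∞`. At `ρ = 1` it is `0`, both because
`1 / Γ` vanishes there and by the convention `Real.Gamma 0 = 0`. -/
noncomputable def mainTerm (x ρ : ℝ) : ℝ := x⁻¹ * (Gamma (1 - ρ))⁻¹

section MainTerm

variable {lam t ρ : ℝ}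

lemma hasDerivAt_mainTerm (hlam : 0 < lam) (ht : 0 < t) (hρ : ρ < 1) :
    HasDerivAt (fun ρ => mainTerm (lam * t ^ ρ) ρ)
      (-((lam * t ^ ρ)⁻¹ *
        (deriv (fun v => (Gamma v)⁻¹) (1 - ρ) + Real.log t * (Gamma (1 - ρ))⁻¹))) ρ := by
  have hG := (hasDerivAt_inv_Gamma (sub_pos.2 hρ)).differentiableAt.hasDerivAt.comp_const_sub 1 ρ
  have hx : HasDerivAt (fun ρ : ℝ => lam * t ^ ρ) (lam * (t ^ ρ * Real.log t)) ρ :=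
    (Real.hasStrictDerivAt_const_rpow ht ρ).hasDerivAt.const_mul lam
  refine ((hx.fun_inv (by positivity)).fun_mul hG).congr_deriv ?_
  field

lemma deriv_mainTerm_le (hlam : 0 < lam) (ht : 1 ≤ t) (hρ₀ : 0 ≤ ρ) (hρ₁ : ρ < 1) :
    deriv (fun ρ => mainTerm (lam * t ^ ρ) ρ) ρ
      ≤ -((lam * t ^ ρ)⁻¹ * ((1 + ρ) / 2 + Real.log t * (1 - ρ))) := by
  have hderiv := one_sub_half_le_deriv_inv_Gamma (sub_pos.2 hρ₁) (by linarith)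
  have hself := self_le_inv_Gamma (sub_nonneg.2 hρ₁.le) (by linarith)
  have hlog : 0 ≤ Real.log t := Real.log_nonneg ht
  rw [(hasDerivAt_mainTerm hlam (by linarith) hρ₁).deriv]
  gcongr
  linarith

end MainTerm

/-- What remains of the inversion integrand `kernel x ρ q` after its leading term as `x → ∞`,
`cexp (q ^ 2) * (q⁻¹ * symbol x ρ q)`, is split off (with the opposite sign). -/
noncomputable def remainder (x ρ : ℝ) (q : ℂ) : ℂ :=
  cexp (q ^ 2) * (q⁻¹ * (symbol x ρ q ^ 2 / (1 + symbol x ρ q)))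

section Remainder

variable {x ρ c : ℝ}

lemma continuous_comp_vertLine {f : ℂ → ℂ} (hc : 0 < c)
    (hf : ∀ q : ℂ, 0 < q.re → ContinuousAt f q) : Continuous fun y => f (vertLine c y) :=
  continuous_iff_continuousAt.2 fun y =>
    (hf _ (by simpa using hc)).comp (continuous_vertLine c).continuousAt

lemma continuous_kernel_vertLine (hx : 0 ≤ x) (hρ₀ : 0 ≤ ρ) (hρ₁ : ρ ≤ 1) (hc : 0 < c) :
    Continuous fun y => kernel x ρ (vertLine c y) :=
  continuous_comp_vertLine hc fun _ hq => (differentiableAt_kernel hx hρ₀ hρ₁ hq).continuousAt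

lemma integrable_kernel_vertLine (hx : 0 ≤ x) (hρ₀ : 0 ≤ ρ) (hρ₁ : ρ ≤ 1) (hc : 0 < c) :
    Integrable fun y => kernel x ρ (vertLine c y) :=
  (integrable_evenGaussian _).mono'
    (continuous_kernel_vertLine hx hρ₀ hρ₁ hc).aestronglyMeasurable
    (ae_of_all _ (norm_kernel_vertLine_le hx hρ₀ hρ₁ hc (left_mem_Icc.2 le_rfl)))

lemma remainder_eq_sub_kernel {q : ℂ} (hx : 0 ≤ x) (hρ₀ : 0 ≤ ρ) (hρ₁ : ρ ≤ 1) (hq : 0 < q.re) :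
    remainder x ρ q
      = (x : ℂ)⁻¹ * (cexp (q ^ 2) * q ^ ((2 * ρ - 1 : ℝ) : ℂ)) - kernel x ρ q := by
  have hne := one_add_symbol_ne_zero hx hρ₀ hρ₁ hq
  have hfrac : symbol x ρ q ^ 2 / (1 + symbol x ρ q)
      = symbol x ρ q - symbol x ρ q / (1 + symbol x ρ q) := by
    field
  have hlead : q⁻¹ * symbol x ρ q = (x : ℂ)⁻¹ * q ^ ((2 * ρ - 1 : ℝ) : ℂ) := by
    rw [symbol, Complex.ofReal_sub, Complex.ofReal_one,
      Complex.cpow_sub _ _ (ne_zero_of_re_pos hq), Complex.cpow_one]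
    ring
  rw [remainder, kernel, hfrac]
  linear_combination cexp (q ^ 2) * hlead

lemma integrable_remainder_vertLine (hx : 0 ≤ x) (hρ₀ : 0 ≤ ρ) (hρ₁ : ρ ≤ 1) (hc : 0 < c) :
    Integrable fun y => remainder x ρ (vertLine c y) := by
  simp only [remainder_eq_sub_kernel hx hρ₀ hρ₁ (q := vertLine c _) (by simpa using hc)]
  exact ((integrable_cexp_sq_mul_cpow hc _).const_mul _).sub
    (integrable_kernel_vertLine hx hρ₀ hρ₁ hc)

theorem mittagLeffler_neg_eq_kernel (hx : 0 < x) (hρ₀ : 0 < ρ) (hρ₁ : ρ ≤ 1) (hc : 0 < c) :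
    mittagLeffler ρ (-x) = π⁻¹ * (∫ y, kernel x ρ (vertLine c y)).re := by
  rw [integral_kernel_vertLine hx hρ₀ hρ₁ hc, Complex.ofReal_re,
    inv_mul_cancel_left₀ Real.pi_ne_zero]

theorem mittagLeffler_neg_eq_remainder (hx : 0 < x) (hρ₀ : 0 < ρ) (hρ₁ : ρ ≤ 1) (hc : 0 < c) :
    mittagLeffler ρ (-x)
      = mainTerm x ρ - π⁻¹ * (∫ y, remainder x ρ (vertLine c y)).re := by
  have hlead : ∫ y, remainder x ρ (vertLine c y)
      = ((π * mainTerm x ρ : ℝ) : ℂ) - ∫ y, kernel x ρ (vertLine c y) := by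
    simp only [remainder_eq_sub_kernel hx.le hρ₀.le hρ₁ (q := vertLine c _) (by simpa using hc)]
    rw [integral_sub ((integrable_cexp_sq_mul_cpow hc _).const_mul _)
        (integrable_kernel_vertLine hx.le hρ₀.le hρ₁ hc),
      integral_const_mul, integral_cexp_sq_mul_cpow hc,
      show (1 - (2 * ρ - 1)) / 2 = 1 - ρ by ring, mainTerm]
    push_cast
    ring
  rw [hlead, mittagLeffler_neg_eq_kernel hx hρ₀ hρ₁ hc, Complex.sub_re, Complex.ofReal_re, mul_sub,
    inv_mul_cancel_left₀ Real.pi_ne_zero, sub_sub_cancel]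

end Remainder

/-- The derivative in `ρ` of `remainder x ρ q` along `x = lam * t ^ ρ`, where `L = log t`. -/
noncomputable def remainderDeriv (L x ρ : ℝ) (q : ℂ) : ℂ :=
  cexp (q ^ 2) * (q⁻¹ * ((2 * Complex.log q - L) *
    (symbol x ρ q ^ 2 * ((2 + symbol x ρ q) / (1 + symbol x ρ q) ^ 2))))

section RemainderDeriv

variable {lam t ρ : ℝ} {q : ℂ}

lemma hasDerivAt_symbol (lam ρ : ℝ) (ht : 0 < t) (hq : q ≠ 0) :
    HasDerivAt (fun ρ : ℝ => symbol (lam * t ^ ρ) ρ q)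
      ((2 * Complex.log q - Real.log t) * symbol (lam * t ^ ρ) ρ q) ρ := by
  have hexp (ρ : ℝ) : symbol (lam * t ^ ρ) ρ q
      = (lam : ℂ)⁻¹ * cexp (ρ * (2 * Complex.log q - Real.log t)) := by
    rw [symbol, Complex.cpow_def_of_ne_zero hq, Real.rpow_def_of_pos ht, mul_sub, Complex.exp_sub]
    push_cast
    rw [mul_comm (ρ : ℂ) (Real.log t), show Complex.log q * (2 * (ρ : ℂ))
      = ρ * (2 * Complex.log q) by ring]
    ring
  simp only [hexp]
  refine ((((hasDerivAt_id ρ).ofReal_comp.mul_const _).cexp).const_mul _).congr_deriv ?_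
  simp only [id, Complex.ofReal_one]
  ring

lemma hasDerivAt_remainder (hlam : 0 ≤ lam) (ht : 0 < t) (hρ₀ : 0 ≤ ρ) (hρ₁ : ρ ≤ 1)
    (hq : 0 < q.re) :
    HasDerivAt (fun ρ : ℝ => remainder (lam * t ^ ρ) ρ q)
      (remainderDeriv (Real.log t) (lam * t ^ ρ) ρ q) ρ := by
  have hsymb := hasDerivAt_symbol lam ρ ht (ne_zero_of_re_pos hq)
  have hne := one_add_symbol_ne_zero (x := lam * t ^ ρ) (by positivity) hρ₀ hρ₁ hq
  refine ((((hsymb.fun_pow 2).fun_div (hsymb.const_add 1) hne).const_mul q⁻¹).const_mul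
    (cexp (q ^ 2))).congr_deriv ?_
  rw [remainderDeriv]
  field

lemma continuous_remainderDeriv_vertLine {x c : ℝ} (L : ℝ) (hx : 0 ≤ x) (hρ₀ : 0 ≤ ρ)
    (hρ₁ : ρ ≤ 1) (hc : 0 < c) : Continuous fun y => remainderDeriv L x ρ (vertLine c y) := by
  refine continuous_comp_vertLine hc fun q hq => DifferentiableAt.continuousAt (𝕜 := ℂ) ?_
  have hsymb := differentiableAt_symbol (x := x) (ρ := ρ) hq
  have hlog := Complex.differentiableAt_log (z := q) (Or.inl hq)
  have hexp : DifferentiableAt ℂ (fun q => cexp (q ^ 2) * q⁻¹) q :=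
    (differentiableAt_id.pow 2).cexp.mul (differentiableAt_inv (ne_zero_of_re_pos hq))
  have hne := pow_ne_zero 2 (one_add_symbol_ne_zero hx hρ₀ hρ₁ hq)
  have hmain := ((hlog.const_mul 2).sub_const (L : ℂ)).mul
    ((hsymb.pow 2).mul ((hsymb.const_add 2).div ((hsymb.const_add 1).pow 2) hne))
  exact (hexp.mul hmain).congr_of_eventuallyEq (.of_forall fun q => (mul_assoc _ _ _).symm)

end RemainderDeriv

section VerticalLineHalf

variable {ρ : ℝ}

lemma norm_vertLine_sq (c y : ℝ) : ‖vertLine c y‖ ^ 2 = c ^ 2 + y ^ 2 := by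
  rw [← Complex.normSq_eq_norm_sq, Complex.normSq_apply, re_vertLine, im_vertLine]
  ring

lemma norm_two_mul_log_le {q : ℂ} (hq : 0 ≤ q.re) :
    ‖2 * Complex.log q‖ ≤ |Real.log (‖q‖ ^ 2)| + π := by
  have harg : |q.arg| ≤ π / 2 := Complex.abs_arg_le_pi_div_two_iff.2 hq
  have hnorm := Complex.norm_le_abs_re_add_abs_im (Complex.log q)
  rw [Complex.log_re, Complex.log_im] at hnorm
  rw [norm_mul, Complex.norm_two, Real.log_pow, abs_mul, Nat.cast_two, abs_two]
  linarith

lemma norm_two_mul_log_vertLine_half_le (y : ℝ) :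
    ‖2 * Complex.log (vertLine (1 / 2) y)‖ ≤ 4.85 + y ^ 2 := by
  have hquarter : Real.log (1 / 4) = -(2 * Real.log 2) := by
    rw [show (1 / 4 : ℝ) = (2 ^ 2)⁻¹ by norm_num, Real.log_inv, Real.log_pow, Nat.cast_two]
  have hlower : Real.log (1 / 4) ≤ Real.log (‖vertLine (1 / 2) y‖ ^ 2) := by
    gcongr
    rw [norm_vertLine_sq]
    linarith [sq_nonneg y]
  have hupper := Real.log_le_sub_one_of_pos (x := ‖vertLine (1 / 2) y‖ ^ 2)
    (by rw [norm_vertLine_sq]; positivity)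
  have hlog : |Real.log (‖vertLine (1 / 2) y‖ ^ 2)| ≤ 1.39 + y ^ 2 := by
    rw [abs_le]
    rw [norm_vertLine_sq] at *
    constructor <;> linarith [Real.log_two_lt_d9, sq_nonneg y]
  have hle := norm_two_mul_log_le (q := vertLine (1 / 2) y) (by rw [re_vertLine]; norm_num)
  linarith [Real.pi_lt_d2]

lemma inv_mul_rpow_two_mul_sq_le {n : ℝ} (hn : 1 / 2 ≤ n) (hρ₀ : 0 ≤ ρ) (hρ₁ : ρ ≤ 1) :
    n⁻¹ * (n ^ (2 * ρ)) ^ 2 ≤ (1 - ρ) * 2 + ρ * n ^ 3 := by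
  have hn₀ : 0 < n := by linarith
  have hpow : (n ^ (2 * ρ)) ^ 2 = (n ^ 4) ^ ρ := by
    rw [← Real.rpow_natCast, ← Real.rpow_mul hn₀.le, ← Real.rpow_natCast n 4,
      ← Real.rpow_mul hn₀.le]
    congr 1
    push_cast
    ring
  have hamgm : (n ^ 4) ^ ρ ≤ (1 - ρ) * 1 + ρ * n ^ 4 := by
    simpa only [Real.one_rpow, one_mul] using Real.geom_mean_le_arith_mean2_weighted
      (sub_nonneg.2 hρ₁) hρ₀ zero_le_one (by positivity : 0 ≤ n ^ 4) (sub_add_cancel 1 ρ)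
  have hinv : n⁻¹ ≤ 2 := inv_le_of_inv_le₀ two_pos (by linarith)
  calc n⁻¹ * (n ^ (2 * ρ)) ^ 2 ≤ n⁻¹ * ((1 - ρ) * 1 + ρ * n ^ 4) := by
        rw [hpow]
        gcongr
    _ = (1 - ρ) * n⁻¹ + ρ * n ^ 3 := by field
    _ ≤ (1 - ρ) * 2 + ρ * n ^ 3 := by gcongr

lemma norm_inv_mul_rpow_vertLine_half_le (hρ₀ : 0 ≤ ρ) (hρ₁ : ρ ≤ 1) (y : ℝ) :
    ‖vertLine (1 / 2) y‖⁻¹ * (‖vertLine (1 / 2) y‖ ^ (2 * ρ)) ^ 2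
      ≤ (1 - ρ) * 2 + ρ * (73 / 384) + ρ * (41 / 48) * y ^ 2 + ρ * (3 / 8) * y ^ 4 := by
  have hcube : ‖vertLine (1 / 2) y‖ ^ 3 ≤ 73 / 384 + 41 / 48 * y ^ 2 + 3 / 8 * y ^ 4 := by
    calc ‖vertLine (1 / 2) y‖ ^ 3
        ≤ 2 / 3 * ‖vertLine (1 / 2) y‖ ^ 2 + 3 / 8 * (‖vertLine (1 / 2) y‖ ^ 2) ^ 2 := by
          nlinarith [mul_nonneg (sq_nonneg ‖vertLine (1 / 2) y‖)
            (sq_nonneg (3 * ‖vertLine (1 / 2) y‖ - 4))]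
      _ = 73 / 384 + 41 / 48 * y ^ 2 + 3 / 8 * y ^ 4 := by
          rw [norm_vertLine_sq]
          ring
  have hre := Complex.re_le_norm (vertLine (1 / 2) y)
  rw [re_vertLine] at hre
  calc _ ≤ (1 - ρ) * 2 + ρ * ‖vertLine (1 / 2) y‖ ^ 3 := inv_mul_rpow_two_mul_sq_le hre hρ₀ hρ₁
    _ ≤ (1 - ρ) * 2 + ρ * (73 / 384 + 41 / 48 * y ^ 2 + 3 / 8 * y ^ 4) := by gcongr
    _ = _ := by ring

lemma norm_two_add_symbol_div_sq_le {x : ℝ} (hx : 0 ≤ x) (hρ₀ : 0 ≤ ρ) (hρ₁ : ρ ≤ 1) (y : ℝ) :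
    ‖(2 + symbol x ρ (vertLine (1 / 2) y)) / (1 + symbol x ρ (vertLine (1 / 2) y)) ^ 2‖
      ≤ 2 + 3 * y ^ 2 := by
  have hq : 0 < (vertLine (1 / 2) y).re := by rw [re_vertLine]; norm_num
  have hne := one_add_symbol_ne_zero hx hρ₀ hρ₁ hq
  have hfrac : (2 + symbol x ρ (vertLine (1 / 2) y)) / (1 + symbol x ρ (vertLine (1 / 2) y)) ^ 2
      = (1 + symbol x ρ (vertLine (1 / 2) y))⁻¹
        + (1 + symbol x ρ (vertLine (1 / 2) y))⁻¹ ^ 2 := by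
    field
  have hinv := norm_inv_one_add_symbol_le hx hρ₀ hρ₁ hq
  have hinv_sq := norm_inv_one_add_symbol_sq_le hx hρ₀ hρ₁ hq
  rw [re_vertLine, im_vertLine] at hinv hinv_sq
  rw [hfrac]
  calc _ ≤ ‖(1 + symbol x ρ (vertLine (1 / 2) y))⁻¹‖
        + ‖(1 + symbol x ρ (vertLine (1 / 2) y))⁻¹‖ ^ 2 := by
        rw [← norm_pow]
        exact norm_add_le _ _
    _ ≤ (1 + y ^ 2 / (4 * (1 / 2) ^ 2)) + (1 + y ^ 2 / (2 * (1 / 2) ^ 2)) :=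
        add_le_add hinv hinv_sq
    _ = 2 + 3 * y ^ 2 := by ring

/-- The Gaussian majorant of `remainderDeriv` on the line `Re q = 1 / 2`, up to the factor
`x⁻¹ ^ 2 * exp (1 / 4)`; the parameter `m` is `4.85 + log t`. -/
noncomputable def majorant (ρ m y : ℝ) : ℝ :=
  ((1 - ρ) * 2 + ρ * (73 / 384) + ρ * (41 / 48) * y ^ 2 + ρ * (3 / 8) * y ^ 4)
    * ((2 + 3 * y ^ 2) * (m + y ^ 2)) * rexp (-y ^ 2)

lemma majorant_nonneg {m : ℝ} (hρ₀ : 0 ≤ ρ) (hρ₁ : ρ ≤ 1) (hm : 0 ≤ m) (y : ℝ) :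
    0 ≤ majorant ρ m y := by
  have := sub_nonneg.2 hρ₁
  unfold majorant
  positivity

lemma norm_remainderDeriv_le_majorant {L x : ℝ} (hL : 0 ≤ L) (hx : 0 ≤ x) (hρ₀ : 0 ≤ ρ)
    (hρ₁ : ρ ≤ 1) (y : ℝ) :
    ‖remainderDeriv L x ρ (vertLine (1 / 2) y)‖
      ≤ x⁻¹ ^ 2 * rexp (1 / 4) * majorant ρ (4.85 + L) y := by
  have hpow := norm_inv_mul_rpow_vertLine_half_le hρ₀ hρ₁ y
  have hfrac := norm_two_add_symbol_div_sq_le hx hρ₀ hρ₁ y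
  have hlog : ‖2 * Complex.log (vertLine (1 / 2) y) - L‖ ≤ 4.85 + L + y ^ 2 := by
    refine (norm_sub_le _ _).trans ?_
    rw [Complex.norm_of_nonneg hL]
    linarith [norm_two_mul_log_vertLine_half_le y]
  rw [remainderDeriv, norm_mul, norm_mul, norm_mul, norm_mul, norm_pow, norm_inv,
    norm_cexp_sq_vertLine, norm_symbol hx, majorant, show ((1 : ℝ) / 2) ^ 2 = 1 / 4 by norm_num]
  set q := vertLine (1 / 2) y
  calc rexp (1 / 4) * rexp (-y ^ 2) * (‖q‖⁻¹ * (‖2 * Complex.log q - L‖ *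
        ((‖q‖ ^ (2 * ρ) / x) ^ 2 * ‖(2 + symbol x ρ q) / (1 + symbol x ρ q) ^ 2‖)))
      = x⁻¹ ^ 2 * rexp (1 / 4) * (‖q‖⁻¹ * (‖q‖ ^ (2 * ρ)) ^ 2 *
          (‖(2 + symbol x ρ q) / (1 + symbol x ρ q) ^ 2‖ * ‖2 * Complex.log q - L‖)
          * rexp (-y ^ 2)) := by ring
    _ ≤ _ := by
      have := (by positivity : 0 ≤ ‖q‖⁻¹ * (‖q‖ ^ (2 * ρ)) ^ 2).trans hpow
      gcongr

lemma majorant_le_add {m : ℝ} (hρ₀ : 0 ≤ ρ) (hρ₁ : ρ ≤ 1) (hm : 0 ≤ m) (y : ℝ) :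
    majorant ρ m y ≤ majorant 0 m y + majorant 1 m y := by
  have hpoly : 0 ≤ (1 - ρ) * (73 / 384 + 41 / 48 * y ^ 2 + 3 / 8 * y ^ 4) :=
    mul_nonneg (by linarith) (by positivity)
  simp only [majorant, ← add_mul]
  gcongr ?_ * _ * _
  linarith

lemma quartic_mul_exp_eq_evenGaussian (p₀ p₁ p₂ m y : ℝ) :
    (p₀ + p₁ * y ^ 2 + p₂ * y ^ 4) * ((2 + 3 * y ^ 2) * (m + y ^ 2)) * rexp (-y ^ 2)
      = evenGaussian ![2 * m * p₀, (3 * m + 2) * p₀ + 2 * m * p₁,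
        3 * p₀ + (3 * m + 2) * p₁ + 2 * m * p₂, 3 * p₁ + (3 * m + 2) * p₂, 3 * p₂] y := by
  simp only [evenGaussian, Fin.sum_univ_five, Matrix.cons_val, Fin.coe_ofNat_eq_mod]
  ring

lemma integrable_majorant (ρ m : ℝ) : Integrable (majorant ρ m) := by
  unfold majorant
  simp only [quartic_mul_exp_eq_evenGaussian]
  exact integrable_evenGaussian _

lemma integral_majorant (ρ m : ℝ) : ∫ y, majorant ρ m y
    = √π * ((1 - ρ) * (7 * m + 13 / 2) + ρ * (1565 / 256 * m + 23797 / 1536)) := by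
  simp only [majorant, quartic_mul_exp_eq_evenGaussian, integral_evenGaussian]
  simp only [Fin.sum_univ_five, Matrix.cons_val, Fin.coe_ofNat_eq_mod, Nat.zero_mod,
    Nat.one_mod, mul_zero, mul_one, Nat.zero_sub, Nat.reduceSub, Nat.doubleFactorial]
  push_cast
  ring

end VerticalLineHalf

section Monotonicity

variable {lam t ρ : ℝ}

lemma hasDerivAt_integral_remainder (hlam : 0 < lam) (ht : 1 ≤ t) (hρ₀ : 0 < ρ) (hρ₁ : ρ < 1) :
    HasDerivAt (fun ρ : ℝ => ∫ y, remainder (lam * t ^ ρ) ρ (vertLine (1 / 2) y))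
      (∫ y, remainderDeriv (Real.log t) (lam * t ^ ρ) ρ (vertLine (1 / 2) y)) ρ := by
  have hlog : 0 ≤ Real.log t := Real.log_nonneg ht
  have hmaj : Integrable fun y => lam⁻¹ ^ 2 * rexp (1 / 4) *
      (majorant 0 (4.85 + Real.log t) y + majorant 1 (4.85 + Real.log t) y) :=
    ((integrable_majorant _ _).add (integrable_majorant _ _)).const_mul _
  have hint (u : ℝ) (hu : u ∈ Ioo 0 1) :
      Integrable fun y => remainder (lam * t ^ u) u (vertLine (1 / 2) y) :=
    integrable_remainder_vertLine (by positivity) hu.1.le hu.2.le one_half_pos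
  refine (hasDerivAt_integral_of_dominated_loc_of_deriv_le (Ioo_mem_nhds hρ₀ hρ₁)
    (F := fun u y => remainder (lam * t ^ u) u (vertLine (1 / 2) y))
    (F' := fun u y => remainderDeriv (Real.log t) (lam * t ^ u) u (vertLine (1 / 2) y))
    ?_ (hint ρ ⟨hρ₀, hρ₁⟩) (continuous_remainderDeriv_vertLine _ (by positivity) hρ₀.le hρ₁.le
      one_half_pos).aestronglyMeasurable (ae_of_all _ fun y u hu => ?_) hmaj
    (ae_of_all _ fun y u hu => ?_)).2
  · filter_upwards [Ioo_mem_nhds hρ₀ hρ₁] with u hu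
    exact (hint u hu).aestronglyMeasurable
  · have hx : (lam * t ^ u)⁻¹ ≤ lam⁻¹ :=
      inv_anti₀ hlam (le_mul_of_one_le_right hlam.le (Real.one_le_rpow ht hu.1.le))
    refine (norm_remainderDeriv_le_majorant hlog (by positivity) hu.1.le hu.2.le y).trans ?_
    gcongr
    · exact majorant_nonneg hu.1.le hu.2.le (by positivity) y
    · exact majorant_le_add hu.1.le hu.2.le (by positivity) y
  · exact hasDerivAt_remainder hlam.le (by positivity) hu.1.le hu.2.le (by norm_num)

lemma norm_integral_remainderDeriv_le {L x : ℝ} (hL : 0 ≤ L) (hx : 0 ≤ x) (hρ₀ : 0 ≤ ρ)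
    (hρ₁ : ρ ≤ 1) : ‖∫ y, remainderDeriv L x ρ (vertLine (1 / 2) y)‖
      ≤ x⁻¹ ^ 2 * rexp (1 / 4) * (√π * ((1 - ρ) * (40.45 + 7 * L) + ρ * (45.3 + 6.13 * L))) := by
  calc ‖∫ y, remainderDeriv L x ρ (vertLine (1 / 2) y)‖
      ≤ ∫ y, x⁻¹ ^ 2 * rexp (1 / 4) * majorant ρ (4.85 + L) y :=
        norm_integral_le_of_norm_le ((integrable_majorant _ _).const_mul _)
          (ae_of_all _ (norm_remainderDeriv_le_majorant hL hx hρ₀ hρ₁))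
    _ = x⁻¹ ^ 2 * rexp (1 / 4) * (√π * ((1 - ρ) * (7 * (4.85 + L) + 13 / 2)
          + ρ * (1565 / 256 * (4.85 + L) + 23797 / 1536))) := by
        rw [integral_const_mul, integral_majorant]
    _ ≤ _ := by
        have := sub_nonneg.2 hρ₁
        gcongr _ * (_ * (_ * ?_ + _ * ?_)) <;> linarith

lemma exp_one_quarter_le : rexp (1 / 4) ≤ 0.7246 * √π := by
  have hexp : rexp (1 / 4) ≤ 1.2842 := by
    refine le_of_pow_le_pow_left₀ four_ne_zero (by norm_num) ?_
    rw [← Real.exp_nat_mul, show ((4 : ℕ) : ℝ) * (1 / 4) = 1 by norm_num]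
    exact Real.exp_one_lt_d9.le.trans (by norm_num)
  have hpi : 1.7724 ≤ √π := Real.le_sqrt_of_sq_le (by linarith [Real.pi_gt_d4])
  linarith

lemma inv_pi_mul_norm_integral_remainderDeriv_le {L x : ℝ} (hL : 0 ≤ L) (hx : 0 ≤ x)
    (hρ₀ : 0 ≤ ρ) (hρ₁ : ρ ≤ 1) : π⁻¹ * ‖∫ y, remainderDeriv L x ρ (vertLine (1 / 2) y)‖
      ≤ x⁻¹ ^ 2 * (0.7246 * ((1 - ρ) * (40.45 + 7 * L) + ρ * (45.3 + 6.13 * L))) := by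
  rw [inv_mul_le_iff₀ Real.pi_pos]
  refine (norm_integral_remainderDeriv_le hL hx hρ₀ hρ₁).trans ?_
  have := sub_nonneg.2 hρ₁
  calc _ ≤ x⁻¹ ^ 2 * (0.7246 * √π) *
        (√π * ((1 - ρ) * (40.45 + 7 * L) + ρ * (45.3 + 6.13 * L))) := by
        gcongr
        exact exp_one_quarter_le
    _ = √π * √π *
        (x⁻¹ ^ 2 * (0.7246 * ((1 - ρ) * (40.45 + 7 * L) + ρ * (45.3 + 6.13 * L)))) := by ring
    _ = _ := by rw [Real.mul_self_sqrt Real.pi_pos.le]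

lemma remainder_constants_lt {L : ℝ} (hL : 0.69 ≤ L) (hρ₀ : 0 ≤ ρ) (hρ₁ : ρ < 1) :
    0.7246 * ((1 - ρ) * (40.45 + 7 * L) + ρ * (45.3 + 6.13 * L))
      < (43 + 4.6 * L) * ((1 + ρ) / 2 + L * (1 - ρ)) := by
  have hρ : 0 < 1 - ρ := sub_pos.2 hρ₁
  norm_num at hL ⊢
  nlinarith [mul_nonneg hρ.le (sub_nonneg.2 hL), mul_nonneg hρ₀ (sub_nonneg.2 hL),
    mul_nonneg hρ.le (mul_self_nonneg L)]

theorem hasDerivAt_mittagLeffler_neg (hlam : 0 < lam) (ht : 1 ≤ t) (hρ₀ : 0 < ρ) (hρ₁ : ρ < 1) :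
    HasDerivAt (fun ρ => mittagLeffler ρ (-(lam * t ^ ρ)))
      (deriv (fun ρ => mainTerm (lam * t ^ ρ) ρ) ρ
        - π⁻¹ * (∫ y, remainderDeriv (Real.log t) (lam * t ^ ρ) ρ (vertLine (1 / 2) y)).re) ρ := by
  have hmain := (hasDerivAt_mainTerm (t := t) hlam (by linarith) hρ₁).differentiableAt.hasDerivAt
  have hrem : HasDerivAt (fun ρ => (∫ y, remainder (lam * t ^ ρ) ρ (vertLine (1 / 2) y)).re)
      (∫ y, remainderDeriv (Real.log t) (lam * t ^ ρ) ρ (vertLine (1 / 2) y)).re ρ :=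
    Complex.reCLM.hasFDerivAt.comp_hasDerivAt ρ (hasDerivAt_integral_remainder hlam ht hρ₀ hρ₁)
  refine (hmain.sub (hrem.const_mul π⁻¹)).congr_of_eventuallyEq ?_
  filter_upwards [Ioo_mem_nhds hρ₀ hρ₁] with u hu
  exact mittagLeffler_neg_eq_remainder (by positivity) hu.1 hu.2.le one_half_pos

theorem deriv_mittagLeffler_lt_zero (hlam : 0 < lam) (ht : 2 ≤ t) (hρ₀ : 0 < ρ) (hρ₁ : ρ < 1)
    (hx : 43 + 4.6 * Real.log t ≤ lam * t ^ ρ) :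
    deriv (fun ρ => mittagLeffler ρ (-(lam * t ^ ρ))) ρ < 0 := by
  have hL : 0.69 ≤ Real.log t := by
    linarith [Real.log_two_gt_d9, Real.log_le_log two_pos ht]
  have hL₀ : 0 ≤ Real.log t := by linarith
  have hx₀ : 0 < lam * t ^ ρ := by positivity
  rw [(hasDerivAt_mittagLeffler_neg hlam (by linarith) hρ₀ hρ₁).deriv]
  have hmain := deriv_mainTerm_le hlam (by linarith : 1 ≤ t) hρ₀.le hρ₁
  have hrem := inv_pi_mul_norm_integral_remainderDeriv_le hL₀ hx₀.le hρ₀.le hρ₁.le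
  set L := Real.log t
  set x := lam * t ^ ρ
  set R := ∫ y, remainderDeriv L x ρ (vertLine (1 / 2) y)
  have hre : -(π⁻¹ * R.re) ≤ π⁻¹ * ‖R‖ := by
    rw [← mul_neg]
    gcongr
    exact (neg_le_abs _).trans (Complex.abs_re_le_norm R)
  have hdom : x⁻¹ ^ 2 * (0.7246 * ((1 - ρ) * (40.45 + 7 * L) + ρ * (45.3 + 6.13 * L)))
      < x⁻¹ * ((1 + ρ) / 2 + L * (1 - ρ)) := by
    have := sub_nonneg.2 hρ₁.le
    calc _ < x⁻¹ ^ 2 * ((43 + 4.6 * L) * ((1 + ρ) / 2 + L * (1 - ρ))) :=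
          mul_lt_mul_of_pos_left (remainder_constants_lt hL hρ₀.le hρ₁) (by positivity)
      _ ≤ x⁻¹ ^ 2 * (x * ((1 + ρ) / 2 + L * (1 - ρ))) := by gcongr
      _ = x⁻¹ * ((1 + ρ) / 2 + L * (1 - ρ)) := by field
  linarith

theorem continuousOn_mittagLeffler_neg (hlam : 0 < lam) (ht : 0 < t) :
    ContinuousOn (fun ρ => mittagLeffler ρ (-(lam * t ^ ρ))) (Ioc 0 1) := by
  have hint : ContinuousOn (fun ρ : ℝ => ∫ y, kernel (lam * t ^ ρ) ρ (vertLine (1 / 2) y))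
      (Ioc 0 1) := by
    refine continuousOn_of_dominated (fun ρ hρ => (continuous_kernel_vertLine (by positivity)
        hρ.1.le hρ.2 one_half_pos).aestronglyMeasurable)
      (fun ρ hρ => ae_of_all _ (norm_kernel_vertLine_le (by positivity) hρ.1.le hρ.2
        one_half_pos (left_mem_Icc.2 le_rfl))) (integrable_evenGaussian _)
      (ae_of_all _ fun y ρ hρ => ContinuousAt.continuousWithinAt ?_)
    have hq : 0 < (vertLine (1 / 2) y).re := by norm_num
    have hsymb := (hasDerivAt_symbol lam ρ ht (ne_zero_of_re_pos hq)).continuousAt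
    exact continuousAt_const.mul (continuousAt_const.mul (hsymb.div (hsymb.const_add 1)
      (one_add_symbol_ne_zero (by positivity) hρ.1.le hρ.2 hq)))
  refine ((Complex.continuous_re.comp_continuousOn hint).const_smul π⁻¹).congr fun ρ hρ => ?_
  exact mittagLeffler_neg_eq_kernel (by positivity) hρ.1 hρ.2 one_half_pos

theorem strictAntiOn_mittagLeffler_neg {ρ₀ : ℝ} (hlam : 0 < lam) (ht : 2 ≤ t) (hρ₀ : 0 < ρ₀)
    (hx : 43 + 4.6 * Real.log t ≤ lam * t ^ ρ₀) :
    StrictAntiOn (fun ρ => mittagLeffler ρ (-(lam * t ^ ρ))) (Icc ρ₀ 1) := by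
  refine strictAntiOn_of_deriv_neg (convex_Icc ρ₀ 1)
    ((continuousOn_mittagLeffler_neg hlam (by linarith)).mono fun ρ hρ =>
      ⟨hρ₀.trans_le hρ.1, hρ.2⟩) fun ρ hρ => ?_
  rw [interior_Icc] at hρ
  refine deriv_mittagLeffler_lt_zero hlam ht (hρ₀.trans hρ.1) hρ.2 (hx.trans ?_)
  gcongr
  exacts [by linarith, hρ.1.le]

lemma mittagLeffler_one (z : ℝ) : mittagLeffler 1 z = rexp z := by
  rw [mittagLeffler, Real.exp_eq_exp_ℝ, NormedSpace.exp_eq_tsum_div]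
  simp only [one_mul, Real.Gamma_nat_eq_factorial]

end Monotonicity

lemma existsUnique_mem_Ico_iff_of_strictAntiOn {f : ℝ → ℝ} {a b d : ℝ} (hab : a ≤ b)
    (hf : ContinuousOn f (Icc a b)) (hanti : StrictAntiOn f (Icc a b)) :
    (∃! x, x ∈ Ico a b ∧ f x = d) ↔ f b < d ∧ d ≤ f a := by
  rw [← mem_Ioc, ← hf.image_Ico_of_strictAntiOn hab hanti]
  refine ⟨fun h => h.exists, fun ⟨x, hx, hxd⟩ => ⟨x, ⟨hx, hxd⟩, fun y ⟨hy, hyd⟩ => ?_⟩⟩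
  exact hanti.injOn (Ico_subset_Icc_self hy) (Ico_subset_Icc_self hx) (hyd.trans hxd.symm)

end MittagLeffler

open MittagLeffler in
theorem stmt4_general (ρ₀ lam₀ t₀ : ℝ) (hρ₀ : 0 < ρ₀) (hρ₁ : ρ₀ ≤ 1) (hlam₀ : 0 < lam₀)
    (ht₀ : 2 ≤ t₀) (hx : 43 + 4.6 * Real.log t₀ ≤ lam₀ * t₀ ^ ρ₀) (d : ℝ) :
    (∃! ρ : ℝ, ρ ∈ Ico ρ₀ 1 ∧ mittagLeffler ρ (-(lam₀ * t₀ ^ ρ)) = d) ↔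
      rexp (-(lam₀ * t₀)) < d ∧ d ≤ mittagLeffler ρ₀ (-(lam₀ * t₀ ^ ρ₀)) := by
  have hcont : ContinuousOn (fun ρ => mittagLeffler ρ (-(lam₀ * t₀ ^ ρ))) (Icc ρ₀ 1) :=
    (continuousOn_mittagLeffler_neg hlam₀ (by linarith)).mono fun ρ hρ =>
      ⟨hρ₀.trans_le hρ.1, hρ.2⟩
  rw [existsUnique_mem_Ico_iff_of_strictAntiOn hρ₁ hcont
    (strictAntiOn_mittagLeffler_neg hlam₀ ht₀ hρ₀ hx), mittagLeffler_one, Real.rpow_one]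

/-- With `B₁ = 43`, `B₂ = 4.6`: if `t₀ ≥ 2` and `t₀^{ρ₀} > (B₁/ρ₀ + B₂ ln t₀)/λ₀`,
then for every `d > 0` there is a unique `ρ ∈ [ρ₀, 1)` with `E_ρ(−λ₀ t₀^ρ) = d` iff
`e^{−λ₀ t₀} < d ≤ E_{ρ₀}(−λ₀ t₀^{ρ₀})`. -/
theorem stmt4 (ρ₀ lam₀ t₀ : ℝ) (hρ₀ : 0 < ρ₀) (hρ₀' : ρ₀ < 1) (hlam₀ : 0 < lam₀)
    (ht₀ : 2 ≤ t₀) (ht₀' : (43 / ρ₀ + 4.6 * Real.log t₀) / lam₀ < t₀ ^ ρ₀) :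
    ∀ d : ℝ, 0 < d →
      ((∃! ρ : ℝ, ρ ∈ Set.Ico ρ₀ 1 ∧ mittagLeffler ρ (-(lam₀ * t₀ ^ ρ)) = d) ↔
        (Real.exp (-(lam₀ * t₀)) < d ∧ d ≤ mittagLeffler ρ₀ (-(lam₀ * t₀ ^ ρ₀)))) := by
  intro d _
  refine stmt4_general ρ₀ lam₀ t₀ hρ₀ hρ₀'.le hlam₀ ht₀ ?_ d
  rw [div_lt_iff₀' hlam₀] at ht₀'
  linarith [le_div_self (by norm_num : (0 : ℝ) ≤ 43) hρ₀ hρ₀'.le]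
end

section
/- Let 0 < ρ₀ < 1, λ₀ > 0, and set B₁ = 43, B₂ = 4.6. If t₀ ≥ 2 and t₀^{ρ₀} > (B₁/ρ₀ + B₂ ln t₀)/λ₀, then for every λ ≥ λ₀ and every ρ ∈ [ρ₀, 1), the derivative with respect to ρ of the function ρ ↦ E_ρ(−λ t₀^ρ) is negative; consequently this function is strictly monotonically decreasing on [ρ₀, 1). -/
open Set Real

/-!
In the logarithmic variable `ζ = log s`, Hankel's formula for `1 / Γ`, summed against a geometric
series, represents `E_ρ(-x)` as an integral of `exp s * s ^ ρ / (s ^ ρ + x)` with respect to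
`ds / s`. Expanding the kernel at `x = ∞` splits off the leading term `1 / (x * Γ(1 - ρ))`, and the
remaining integrand is `O(|s| ^ (2 * ρ))` near `s = 0`, so that the contour can be contracted to two
rays from the origin.

For `x = λ * t ^ ρ`, the leading term has `ρ`-derivative at most `-(1 + ρ) / (2 * x)`, whereas the
derivative of the remainder is `O((1 / ρ + log t) / x ^ 2)` and hence loses as soon as `x` exceeds a
multiple of `1 / ρ + log t`. To keep that multiple small, the rays are collapsed onto the negative
axis when `ρ ≤ 1 / 2`, where the imaginary part of the integrand gains a factor `ρ`, and kept at
angle `2 * π / 3` when `ρ ≥ 1 / 2`, away from the singularity that the kernel acquires on the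
negative axis as `ρ → 1`.
-/

namespace MittagLeffler

open MeasureTheory Filter Topology

section GammaWeight

/-- The function `u ↦ exp (s u - c exp u)`, which is the integrand `t ^ (s - 1) * exp (-c t)` of
Euler's integral for `Γ(s)` with respect to the logarithmic variable `u = log t`. It dominates the
integrands of the contour integrals below along horizontal rays. -/
noncomputable def gammaWeight (c s u : ℝ) : ℝ := rexp (s * u - c * rexp u)

variable {c s : ℝ}

lemma gammaWeight_pos (c s u : ℝ) : 0 < gammaWeight c s u := exp_pos _

@[fun_prop]
lemma continuous_gammaWeight (c s : ℝ) : Continuous (gammaWeight c s) := by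
  unfold gammaWeight; fun_prop

lemma exp_mul_gammaWeight (c s b u : ℝ) :
    rexp (b * u) * gammaWeight c s u = gammaWeight c (s + b) u := by
  rw [gammaWeight, gammaWeight, ← Real.exp_add]
  ring_nf

lemma abs_exp_smul_rpow_mul_exp (c s u : ℝ) :
    |rexp u| • (rexp u ^ (s - 1) * rexp (-(c * rexp u))) = gammaWeight c s u := by
  rw [abs_of_pos (Real.exp_pos u), smul_eq_mul, ← Real.exp_mul, ← Real.exp_add, ← Real.exp_add,
    gammaWeight]
  ring_nf

lemma integral_gammaWeight (hc : 0 < c) (hs : 0 < s) :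
    ∫ u, gammaWeight c s u = (1 / c) ^ s * Gamma s := by
  have h := integral_image_eq_integral_abs_deriv_smul MeasurableSet.univ
    (fun x _ => (Real.hasDerivAt_exp x).hasDerivWithinAt) Real.exp_injective.injOn
    (fun t : ℝ => t ^ (s - 1) * rexp (-(c * t)))
  rw [image_univ, Real.range_exp, Real.integral_rpow_mul_exp_neg_mul_Ioi hs hc] at h
  simpa only [abs_exp_smul_rpow_mul_exp, Measure.restrict_univ] using h.symm

lemma integrable_gammaWeight (hc : 0 < c) (hs : 0 < s) : Integrable (gammaWeight c s) := by
  refine .of_integral_ne_zero ?_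
  rw [integral_gammaWeight hc hs]
  have := Gamma_pos_of_pos hs
  positivity

lemma gammaWeight_le_of_le (c : ℝ) {s s' a u : ℝ} (hs : s ≤ s') (hu : a ≤ u) :
    gammaWeight c s u ≤ rexp (-((s' - s) * a)) * gammaWeight c s' u := by
  rw [gammaWeight, gammaWeight, ← Real.exp_add, Real.exp_le_exp]
  nlinarith [mul_nonneg (sub_nonneg.2 hs) (sub_nonneg.2 hu)]

lemma integrableOn_gammaWeight_Ioi (hc : 0 < c) (s a : ℝ) :
    IntegrableOn (gammaWeight c s) (Ioi a) := by
  refine Integrable.mono' (((integrable_gammaWeight hc (s := max s 1) (by positivity)).const_mul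
    (rexp (-((max s 1 - s) * a)))).integrableOn) (by fun_prop) ?_
  refine (ae_restrict_mem measurableSet_Ioi).mono fun u hu => ?_
  rw [Real.norm_of_nonneg (gammaWeight_pos ..).le]
  exact gammaWeight_le_of_le c (le_max_left ..) (mem_Ioi.1 hu).le

lemma tendsto_gammaWeight_atTop (hc : 0 < c) (s : ℝ) :
    Tendsto (gammaWeight c s) atTop (𝓝 0) := by
  refine ((tendsto_rpow_mul_exp_neg_mul_atTop_nhds_zero s c hc).comp tendsto_exp_atTop).congr
    fun u => ?_
  rw [Function.comp_apply, ← Real.exp_mul, ← Real.exp_add, gammaWeight]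
  ring_nf

lemma abs_le_exp_add_exp_neg_div {b : ℝ} (hb : 0 < b) (u : ℝ) :
    |u| ≤ (rexp (b * u) + rexp (-b * u)) / b := by
  rw [le_div_iff₀ hb, mul_comm, ← abs_of_pos hb, ← abs_mul, abs_of_pos hb, abs_le']
  constructor <;>
    linarith [Real.add_one_le_exp (b * u), Real.add_one_le_exp (-b * u), Real.exp_pos (b * u),
      Real.exp_pos (-b * u)]

lemma abs_mul_gammaWeight_le (hs : 0 < s) (c u : ℝ) :
    |u| * gammaWeight c s u ≤
      2 / s * (gammaWeight c (3 / 2 * s) u + gammaWeight c (s / 2) u) := by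
  calc |u| * gammaWeight c s u
      ≤ (rexp (s / 2 * u) + rexp (-(s / 2) * u)) / (s / 2) * gammaWeight c s u := by
        gcongr
        · exact (gammaWeight_pos ..).le
        · exact abs_le_exp_add_exp_neg_div (half_pos hs) u
    _ = 2 / s * (rexp (s / 2 * u) * gammaWeight c s u
          + rexp (-(s / 2) * u) * gammaWeight c s u) := by
        field_simp
    _ = _ := by
        rw [exp_mul_gammaWeight, exp_mul_gammaWeight]
        ring_nf

lemma integrable_abs_mul_gammaWeight (hc : 0 < c) (hs : 0 < s) :
    Integrable (fun u => |u| * gammaWeight c s u) := by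
  refine Integrable.mono' (((integrable_gammaWeight hc (s := 3 / 2 * s) (by positivity)).add
    (integrable_gammaWeight hc (half_pos hs))).const_mul (2 / s)) (by fun_prop)
    (.of_forall fun u => ?_)
  rw [Real.norm_of_nonneg (mul_nonneg (abs_nonneg u) (gammaWeight_pos ..).le)]
  exact abs_mul_gammaWeight_le hs c u

lemma integrable_add_abs_mul_gammaWeight (A : ℝ) (hc : 0 < c) (hs : 0 < s) :
    Integrable (fun u => (A + |u|) * gammaWeight c s u) := by
  simp only [add_mul]
  exact ((integrable_gammaWeight hc hs).const_mul A).add (integrable_abs_mul_gammaWeight hc hs)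

lemma integral_add_abs_mul_gammaWeight_le (A : ℝ) (hc : 0 < c) (hs : 0 < s) :
    ∫ u, (A + |u|) * gammaWeight c s u ≤ A * ((1 / c) ^ s * Gamma s) + 2 / s *
      ((1 / c) ^ (3 / 2 * s) * Gamma (3 / 2 * s) + (1 / c) ^ (s / 2) * Gamma (s / 2)) := by
  have hs₁ : 0 < 3 / 2 * s := by positivity
  have h₀ := (integrable_gammaWeight hc hs).const_mul A
  have h₁ := integrable_gammaWeight hc hs₁
  have h₂ := integrable_gammaWeight hc (half_pos hs)
  have h₁₂ : Integrable fun u =>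
      2 / s * (gammaWeight c (3 / 2 * s) u + gammaWeight c (s / 2) u) := (h₁.add h₂).const_mul _
  rw [← integral_gammaWeight hc hs, ← integral_gammaWeight hc hs₁,
    ← integral_gammaWeight hc (half_pos hs), ← integral_add h₁ h₂, ← integral_const_mul,
    ← integral_const_mul, ← integral_add h₀ h₁₂]
  refine integral_mono (integrable_add_abs_mul_gammaWeight A hc hs)
    (h₀.add h₁₂) fun u => ?_
  rw [add_mul]
  exact add_le_add_right (abs_mul_gammaWeight_le hs c u) _

lemma convexOn_gammaWeight (c u : ℝ) : ConvexOn ℝ univ (fun s => gammaWeight c s u) := by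
  have h := convexOn_exp.comp_affineMap (AffineMap.lineMap (-(c * rexp u)) (u - c * rexp u))
  refine h.congr fun s _ => ?_
  rw [Function.comp_apply, AffineMap.lineMap_apply_ring', gammaWeight]
  ring_nf

lemma gammaWeight_le_add (c u : ℝ) {s₀ s₁ : ℝ} (hs : s ∈ Icc s₀ s₁) :
    gammaWeight c s u ≤ gammaWeight c s₀ u + gammaWeight c s₁ u :=
  ((convexOn_gammaWeight c u).le_max_of_mem_Icc (mem_univ _) (mem_univ _) hs).trans
    (max_le_add_of_nonneg (gammaWeight_pos ..).le (gammaWeight_pos ..).le)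

lemma convexOn_integral_add_abs_mul_gammaWeight {A : ℝ} (hA : 0 ≤ A) (hc : 0 < c) :
    ConvexOn ℝ (Ioi 0) (fun s => ∫ u, (A + |u|) * gammaWeight c s u) := by
  refine ⟨convex_Ioi 0, fun s hs r hr a b ha hb hab => ?_⟩
  have hint {s : ℝ} (hs : s ∈ Ioi 0) := integrable_add_abs_mul_gammaWeight A hc (mem_Ioi.1 hs)
  simp only [smul_eq_mul]
  rw [← integral_const_mul, ← integral_const_mul,
    ← integral_add ((hint hs).const_mul a) ((hint hr).const_mul b)]
  refine integral_mono (hint (convex_Ioi 0 hs hr ha hb hab))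
    (((hint hs).const_mul a).add ((hint hr).const_mul b)) fun u => ?_
  have h := (convexOn_gammaWeight c u).2 (mem_univ s) (mem_univ r) ha hb hab
  simp only [smul_eq_mul] at h
  linarith [mul_le_mul_of_nonneg_left h (add_nonneg hA (abs_nonneg u))]

end GammaWeight

section GammaBounds

variable {s : ℝ}

lemma Gamma_le_one_of_mem_Icc (hs : s ∈ Icc 1 2) : Gamma s ≤ 1 := by
  have h := convexOn_Gamma.le_max_of_mem_Icc (mem_Ioi.2 one_pos) (mem_Ioi.2 two_pos) hs
  rwa [Gamma_one, Gamma_two, max_self] at h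

lemma Gamma_le_one_div (hs₀ : 0 < s) (hs₁ : s ≤ 1) : Gamma s ≤ 1 / s := by
  rw [le_div_iff₀ hs₀, mul_comm, ← Gamma_add_one hs₀.ne']
  exact Gamma_le_one_of_mem_Icc ⟨by linarith, by linarith⟩

lemma Gamma_le_two_div (hs₀ : 0 < s) (hs₁ : s ≤ 2) : Gamma s ≤ 2 / s := by
  rcases le_total s 1 with h | h
  · exact (Gamma_le_one_div hs₀ h).trans (by gcongr; norm_num)
  · exact (Gamma_le_one_of_mem_Icc ⟨h, hs₁⟩).trans ((one_le_div hs₀).2 hs₁)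

lemma logDeriv_Gamma_le_half (hs₀ : 0 < s) (hs₂ : s ≤ 2) : logDeriv Gamma s ≤ 1 / 2 := by
  have hdiff : ∀ r ∈ Ioi (0 : ℝ), DifferentiableAt ℝ Gamma r := fun r hr =>
    differentiableAt_Gamma fun m => by
      have := mem_Ioi.1 hr
      have : (0 : ℝ) ≤ m := m.cast_nonneg
      linarith
  have hmono := convexOn_log_Gamma.monotoneOn_deriv fun r hr =>
    (hdiff r hr).log (Gamma_pos_of_pos hr).ne'
  have hderiv : ∀ r ∈ Ioi (0 : ℝ), deriv (Real.log ∘ Gamma) r = logDeriv Gamma r := fun r hr =>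
    deriv.log (hdiff r hr) (Gamma_pos_of_pos hr).ne'
  have h := hmono (mem_Ioi.2 hs₀) (mem_Ioi.2 two_pos) hs₂
  have h₂ : deriv Gamma 2 = 1 - eulerMascheroniConstant := by
    have := deriv_Gamma_nat 1
    norm_num at this
    linarith
  rw [hderiv s hs₀, hderiv 2 (mem_Ioi.2 two_pos), logDeriv_apply Gamma 2, h₂, Gamma_two,
    div_one] at h
  linarith [one_half_lt_eulerMascheroniConstant]

end GammaBounds

section Hankel

open Complex (I)

/-- The integrand, in the logarithmic variable `ζ = log s`, of the contour integral of
`exp s * k (log s)` against `ds / s`. -/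
noncomputable def hankelIntegrand (k : ℂ → ℂ) (ζ : ℂ) : ℂ := Complex.exp (Complex.exp ζ) * k ζ

/-- The integral of `hankelIntegrand k` over the upper half of a Hankel contour in the logarithmic
plane: the segment from `a` to `a + φ I`, followed by the ray `{u + φ I | a < u}`. For a kernel
that is real on the real axis, the lower half contributes the complex conjugate, so that the
integral over the full contour, divided by `2 π I`, is the present real number divided by `π`. -/
noncomputable def hankelIntegral (k : ℂ → ℂ) (φ a : ℝ) : ℝ :=
  (∫ u in Ioi a, hankelIntegrand k (u + φ * I)).im +
    (∫ v in (0 : ℝ)..φ, hankelIntegrand k (a + v * I)).re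

/-- The kernels for which Hankel integrals converge and do not depend on the contour. The strip
`0 ≤ im ζ ≤ π` is the closed upper half plane of `s = exp ζ`, and the growth condition says that
`k` is polynomially bounded in `|s|` and `1 / |s|`. -/
structure IsHankelKernel (k : ℂ → ℂ) : Prop where
  differentiableAt : ∀ ζ : ℂ, ζ.im ∈ Icc 0 π → DifferentiableAt ℂ k ζ
  im_ofReal : ∀ u : ℝ, (k u).im = 0
  exists_norm_le : ∃ C y : ℝ, ∀ ζ : ℂ, ζ.im ∈ Icc 0 π → ‖k ζ‖ ≤ C * rexp (y * |ζ.re|)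

variable {k k₁ k₂ : ℂ → ℂ} {C y φ : ℝ} {ζ : ℂ}

lemma im_add_mul_I (u v : ℝ) : (u + v * I : ℂ).im = v := by simp

lemma re_add_mul_I (u v : ℝ) : (u + v * I : ℂ).re = u := by simp

lemma norm_cexp_cexp (ζ : ℂ) :
    ‖Complex.exp (Complex.exp ζ)‖ = rexp (rexp ζ.re * Real.cos ζ.im) := by
  rw [Complex.norm_exp, Complex.exp_re]

lemma norm_hankelIntegrand_le (hφ : 0 ≤ φ) (hζ : ζ.im ∈ Icc φ π) :
    ‖hankelIntegrand k ζ‖ ≤ ‖k ζ‖ * gammaWeight (-Real.cos φ) 0 ζ.re := by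
  rw [hankelIntegrand, norm_mul, norm_cexp_cexp, mul_comm, gammaWeight]
  have h := cos_le_cos_of_nonneg_of_le_pi hφ hζ.2 hζ.1
  gcongr
  nlinarith [Real.exp_pos ζ.re]

lemma norm_hankelIntegrand_le_of_norm_le (hφ : 0 ≤ φ) (hζ : ζ.im ∈ Icc φ π)
    (hk : ‖k ζ‖ ≤ C * rexp (y * ζ.re)) :
    ‖hankelIntegrand k ζ‖ ≤ C * gammaWeight (-Real.cos φ) y ζ.re := by
  calc ‖hankelIntegrand k ζ‖ ≤ C * rexp (y * ζ.re) * gammaWeight (-Real.cos φ) 0 ζ.re :=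
        (norm_hankelIntegrand_le hφ hζ).trans
          (mul_le_mul_of_nonneg_right hk (gammaWeight_pos ..).le)
    _ = C * gammaWeight (-Real.cos φ) y ζ.re := by rw [mul_assoc, exp_mul_gammaWeight, zero_add]

lemma pi_mem_Ioc : π ∈ Ioc (π / 2) π := ⟨half_lt_self pi_pos, le_rfl⟩

lemma nonneg_of_mem_Ioc (hφ : φ ∈ Ioc (π / 2) π) : 0 ≤ φ := by linarith [hφ.1, pi_pos]

lemma neg_cos_pos_of_mem_Ioc (hφ : φ ∈ Ioc (π / 2) π) : 0 < -Real.cos φ :=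
  neg_pos.2 (cos_neg_of_pi_div_two_lt_of_lt hφ.1 (by linarith [hφ.2, pi_pos]))

lemma hankelIntegral_const_mul (r : ℝ) (k : ℂ → ℂ) (φ a : ℝ) :
    hankelIntegral (fun ζ => r * k ζ) φ a = r * hankelIntegral k φ a := by
  simp only [hankelIntegral, hankelIntegrand, mul_left_comm _ (r : ℂ), integral_const_mul,
    intervalIntegral.integral_const_mul, Complex.im_ofReal_mul, Complex.re_ofReal_mul, mul_add]

namespace IsHankelKernel

lemma of_norm_le_exp (hd : ∀ ζ : ℂ, ζ.im ∈ Icc 0 π → DifferentiableAt ℂ k ζ)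
    (hre : ∀ u : ℝ, (k u).im = 0)
    (hk : ∀ ζ : ℂ, ζ.im ∈ Icc 0 π → ‖k ζ‖ ≤ C * rexp (y * ζ.re)) : IsHankelKernel k := by
  refine ⟨hd, hre, C, |y|, fun ζ hζ => (hk ζ hζ).trans ?_⟩
  have hC : 0 ≤ C := nonneg_of_mul_nonneg_left ((norm_nonneg _).trans (hk ζ hζ)) (Real.exp_pos _)
  rw [← abs_mul]
  gcongr
  exact le_abs_self _

lemma const_mul (h : IsHankelKernel k) (r : ℝ) : IsHankelKernel fun ζ => r * k ζ := by
  obtain ⟨C, y, hC⟩ := h.exists_norm_le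
  refine ⟨fun ζ hζ => (h.differentiableAt ζ hζ).const_mul _, fun u => ?_, ‖(r : ℂ)‖ * C, y,
    fun ζ hζ => ?_⟩
  · rw [Complex.im_ofReal_mul, h.im_ofReal, mul_zero]
  · rw [norm_mul, mul_assoc]
    exact mul_le_mul_of_nonneg_left (hC ζ hζ) (norm_nonneg _)

lemma sub (h₁ : IsHankelKernel k₁) (h₂ : IsHankelKernel k₂) :
    IsHankelKernel fun ζ => k₁ ζ - k₂ ζ := by
  obtain ⟨C₁, y₁, hC₁⟩ := h₁.exists_norm_le
  obtain ⟨C₂, y₂, hC₂⟩ := h₂.exists_norm_le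
  refine ⟨fun ζ hζ => (h₁.differentiableAt ζ hζ).sub (h₂.differentiableAt ζ hζ), fun u => ?_,
    |C₁| + |C₂|, max y₁ y₂, fun ζ hζ => ?_⟩
  · rw [Complex.sub_im, h₁.im_ofReal, h₂.im_ofReal, sub_zero]
  · rw [add_mul]
    refine (norm_sub_le _ _).trans (add_le_add ((hC₁ ζ hζ).trans ?_) ((hC₂ ζ hζ).trans ?_)) <;>
      gcongr <;> first | exact le_abs_self _ | exact le_max_left .. | exact le_max_right ..

lemma differentiableAt_hankelIntegrand (h : IsHankelKernel k) (hζ : ζ.im ∈ Icc 0 π) :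
    DifferentiableAt ℂ (hankelIntegrand k) ζ :=
  Complex.differentiableAt_exp.cexp.mul (h.differentiableAt ζ hζ)

lemma continuous_ray (h : IsHankelKernel k) (hφ : φ ∈ Icc 0 π) :
    Continuous fun u : ℝ => hankelIntegrand k (u + φ * I) :=
  continuous_iff_continuousAt.2 fun u => ContinuousAt.comp (f := fun u : ℝ => (u + φ * I : ℂ))
    (h.differentiableAt_hankelIntegrand (by rwa [im_add_mul_I])).continuousAt (by fun_prop)

lemma intervalIntegrable (h : IsHankelKernel k) (a : ℝ) {v w : ℝ} (hv : v ∈ Icc 0 π)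
    (hw : w ∈ Icc 0 π) :
    IntervalIntegrable (fun v : ℝ => hankelIntegrand k (a + v * I)) volume v w :=
  ContinuousOn.intervalIntegrable fun v' hv' => ContinuousAt.continuousWithinAt <|
    ContinuousAt.comp (f := fun v : ℝ => (a + v * I : ℂ)) (h.differentiableAt_hankelIntegrand
      (by rw [im_add_mul_I]; exact uIcc_subset_Icc hv hw hv')).continuousAt (by fun_prop)

lemma exists_norm_hankelIntegrand_le (h : IsHankelKernel k) (hφ : 0 ≤ φ) (a : ℝ) :
    ∃ C y : ℝ, ∀ u v : ℝ, a ≤ u → v ∈ Icc φ π →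
      ‖hankelIntegrand k (u + v * I)‖ ≤ C * gammaWeight (-Real.cos φ) y u := by
  obtain ⟨C, y, hC⟩ := h.exists_norm_le
  refine ⟨|C| * rexp (|y| * (2 * |a|)), |y|, fun u v hu hv => ?_⟩
  have hbound := norm_hankelIntegrand_le_of_norm_le (k := k) (ζ := u + v * I)
    (C := |C| * rexp (|y| * (2 * |a|))) (y := |y|) hφ (by rwa [im_add_mul_I]) ?_
  · rwa [re_add_mul_I] at hbound
  · refine (hC _ (by rw [im_add_mul_I]; exact ⟨hφ.trans hv.1, hv.2⟩)).trans ?_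
    rw [re_add_mul_I, mul_assoc, ← Real.exp_add, ← mul_add]
    have hu' : |u| ≤ 2 * |a| + u := by
      cases abs_cases u <;> cases abs_cases a <;> linarith
    gcongr
    · exact le_abs_self C
    · exact le_abs_self y

lemma integrableOn_Ioi (h : IsHankelKernel k) (hφ : φ ∈ Ioc (π / 2) π) (a : ℝ) :
    IntegrableOn (fun u : ℝ => hankelIntegrand k (u + φ * I)) (Ioi a) := by
  have hφ₀ := nonneg_of_mem_Ioc hφ
  obtain ⟨C, y, hC⟩ := h.exists_norm_hankelIntegrand_le hφ₀ a
  refine Integrable.mono' ((integrableOn_gammaWeight_Ioi (neg_cos_pos_of_mem_Ioc hφ) y a).const_mul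
    C) (h.continuous_ray ⟨hφ₀, hφ.2⟩).aestronglyMeasurable ?_
  exact (ae_restrict_mem measurableSet_Ioi).mono fun u hu =>
    hC u φ (mem_Ioi.1 hu).le ⟨le_rfl, hφ.2⟩

lemma integral_rect (h : IsHankelKernel k) (a b : ℝ) {v w : ℝ} (hv : 0 ≤ v) (hvw : v ≤ w)
    (hw : w ≤ π) :
    (∫ u : ℝ in a..b, hankelIntegrand k (u + v * I)) -
        (∫ u : ℝ in a..b, hankelIntegrand k (u + w * I)) +
        I * (∫ v' : ℝ in v..w, hankelIntegrand k (b + v' * I)) -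
      I * (∫ v' : ℝ in v..w, hankelIntegrand k (a + v' * I)) = 0 := by
  have hrect := Complex.integral_boundary_rect_eq_zero_of_differentiableOn (hankelIntegrand k)
    ⟨a, v⟩ ⟨b, w⟩ fun ζ hζ => by
      have him := (Complex.mem_reProdIm.1 hζ).2
      rw [uIcc_of_le hvw] at him
      exact (h.differentiableAt_hankelIntegrand
        ⟨hv.trans him.1, him.2.trans hw⟩).differentiableWithinAt
  simpa using hrect

lemma hankelIntegrand_ofReal_im (h : IsHankelKernel k) (u : ℝ) :
    (hankelIntegrand k u).im = 0 := by
  rw [hankelIntegrand, ← Complex.ofReal_exp, ← Complex.ofReal_exp, Complex.im_ofReal_mul,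
    h.im_ofReal, mul_zero]

lemma hankelIntegral_congr_left (h : IsHankelKernel k) (hφ : φ ∈ Ioc (π / 2) π) (a b : ℝ) :
    hankelIntegral k φ a = hankelIntegral k φ b := by
  have hrect := congrArg Complex.im (h.integral_rect a b le_rfl (nonneg_of_mem_Ioc hφ) hφ.2)
  have hreal : (∫ u : ℝ in a..b, hankelIntegrand k (u + (0 : ℝ) * I)).im = 0 := by
    have hre (u : ℝ) : hankelIntegrand k (u + (0 : ℝ) * I) = ((hankelIntegrand k u).re : ℂ) := by
      rw [Complex.ofReal_zero, zero_mul, add_zero]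
      exact Complex.ext (Complex.ofReal_re _).symm (h.hankelIntegrand_ofReal_im u)
    simp only [hre]
    rw [intervalIntegral.integral_ofReal, Complex.ofReal_im]
  have hrays := intervalIntegral.integral_Ioi_sub_Ioi' (h.integrableOn_Ioi hφ a)
    (h.integrableOn_Ioi hφ b)
  simp only [Complex.add_im, Complex.sub_im, hreal, ← hrays, Complex.I_mul_im,
    Complex.zero_im] at hrect
  rw [hankelIntegral, hankelIntegral]
  linarith

lemma tendsto_integral_vertical_atTop (h : IsHankelKernel k) (hφ : φ ∈ Ioc (π / 2) π) :
    Tendsto (fun b : ℝ => ∫ v : ℝ in φ..π, hankelIntegrand k (b + v * I)) atTop (𝓝 0) := by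
  obtain ⟨C, y, hC⟩ := h.exists_norm_hankelIntegrand_le (nonneg_of_mem_Ioc hφ) 0
  have hlim := ((tendsto_gammaWeight_atTop (neg_cos_pos_of_mem_Ioc hφ) y).const_mul C).mul_const
    |π - φ|
  rw [mul_zero, zero_mul] at hlim
  refine squeeze_zero_norm' ((eventually_ge_atTop 0).mono fun b hb => ?_) hlim
  refine intervalIntegral.norm_integral_le_of_norm_le_const fun v hv => ?_
  rw [uIoc_of_le hφ.2] at hv
  exact hC b v hb (Ioc_subset_Icc_self hv)

lemma hankelIntegral_pi (h : IsHankelKernel k) (hφ : φ ∈ Ioc (π / 2) π) (a : ℝ) :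
    hankelIntegral k π a = hankelIntegral k φ a := by
  have hφ₀ := nonneg_of_mem_Ioc hφ
  have hray := fun {θ : ℝ} (hθ : θ ∈ Ioc (π / 2) π) =>
    intervalIntegral_tendsto_integral_Ioi a (h.integrableOn_Ioi hθ a) tendsto_id
  have hlim := (((hray hφ).sub (hray pi_mem_Ioc)).add
    ((h.tendsto_integral_vertical_atTop hφ).const_mul I)).sub_const
      (I * ∫ v : ℝ in φ..π, hankelIntegrand k (a + v * I))
  simp only [id_eq, fun b => h.integral_rect a b hφ₀ hφ.2 le_rfl] at hlim
  have him := congrArg Complex.im (tendsto_nhds_unique tendsto_const_nhds hlim)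
  simp only [Complex.sub_im, Complex.I_mul_im, Complex.zero_im, mul_zero, add_zero] at him
  have hadd := intervalIntegral.integral_add_adjacent_intervals
    (h.intervalIntegrable a (left_mem_Icc.2 pi_pos.le) ⟨hφ₀, hφ.2⟩)
    (h.intervalIntegrable a ⟨hφ₀, hφ.2⟩ (right_mem_Icc.2 pi_pos.le))
  rw [hankelIntegral, hankelIntegral, ← hadd, Complex.add_re]
  linarith

lemma hankelIntegral_sub (h₁ : IsHankelKernel k₁) (h₂ : IsHankelKernel k₂)
    (hφ : φ ∈ Ioc (π / 2) π) (a : ℝ) :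
    hankelIntegral (fun ζ => k₁ ζ - k₂ ζ) φ a = hankelIntegral k₁ φ a - hankelIntegral k₂ φ a := by
  have h₀ := left_mem_Icc.2 pi_pos.le
  have hφ' : φ ∈ Icc 0 π := ⟨nonneg_of_mem_Ioc hφ, hφ.2⟩
  have hsub (ζ : ℂ) : hankelIntegrand (fun ζ => k₁ ζ - k₂ ζ) ζ =
    hankelIntegrand k₁ ζ - hankelIntegrand k₂ ζ := mul_sub _ _ _
  simp only [hankelIntegral, hsub]
  rw [integral_sub (h₁.integrableOn_Ioi hφ a) (h₂.integrableOn_Ioi hφ a),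
    intervalIntegral.integral_sub (h₁.intervalIntegrable a h₀ hφ')
      (h₂.intervalIntegrable a h₀ hφ'), Complex.sub_im, Complex.sub_re]
  ring

lemma hankelIntegral_eq_zero_of_hasDerivAt (h : IsHankelKernel k) (hφ : φ ∈ Ioc (π / 2) π)
    (a : ℝ) {G : ℂ → ℂ} (hG : ∀ ζ : ℂ, ζ.im ∈ Icc 0 π → HasDerivAt G (hankelIntegrand k ζ) ζ)
    (hreal : (G a).im = 0) (hlim : Tendsto (fun u : ℝ => G (u + φ * I)) atTop (𝓝 0)) :
    hankelIntegral k φ a = 0 := by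
  have hφ' : φ ∈ Icc 0 π := ⟨nonneg_of_mem_Ioc hφ, hφ.2⟩
  have hray : ∫ u in Ioi a, hankelIntegrand k (u + φ * I) = 0 - G (a + φ * I) := by
    refine integral_Ioi_of_hasDerivAt_of_tendsto' (fun u _ => ?_) (h.integrableOn_Ioi hφ a) hlim
    have := (hG (u + φ * I) (by rwa [im_add_mul_I])).comp u
      ((Complex.ofRealCLM.hasDerivAt (x := u)).add_const (φ * I))
    simpa [Function.comp_def] using this
  have hsegment : (∫ v in (0 : ℝ)..φ, hankelIntegrand k (a + v * I) * I) =
      G (a + φ * I) - G (a + (0 : ℝ) * I) := by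
    refine intervalIntegral.integral_eq_sub_of_hasDerivAt (f := fun v : ℝ => G (a + v * I))
      (fun v hv => ?_)
      ((h.intervalIntegrable a (left_mem_Icc.2 pi_pos.le) hφ').mul_const I)
    rw [uIcc_of_le hφ'.1] at hv
    have := (hG (a + v * I) (by rw [im_add_mul_I]; exact ⟨hv.1, hv.2.trans hφ.2⟩)).comp v
      (((Complex.ofRealCLM.hasDerivAt (x := v)).mul_const I).const_add (a : ℂ))
    simpa [Function.comp_def] using this
  rw [intervalIntegral.integral_mul_const] at hsegment
  have him := congrArg Complex.im hsegment
  rw [Complex.mul_I_im, Complex.ofReal_zero, zero_mul, add_zero, Complex.sub_im, hreal] at him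
  rw [hankelIntegral, hray, him, Complex.sub_im, Complex.zero_im]
  ring

lemma integrable (h : IsHankelKernel k) (hφ : φ ∈ Ioc (π / 2) π) (hy : 0 < y)
    (hk : ∀ ζ : ℂ, ζ.im ∈ Icc 0 π → ‖k ζ‖ ≤ C * rexp (y * ζ.re)) :
    Integrable fun u : ℝ => hankelIntegrand k (u + φ * I) := by
  have hφ' : φ ∈ Icc 0 π := ⟨nonneg_of_mem_Ioc hφ, hφ.2⟩
  refine Integrable.mono' ((integrable_gammaWeight (neg_cos_pos_of_mem_Ioc hφ) hy).const_mul C)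
    (h.continuous_ray hφ').aestronglyMeasurable (.of_forall fun u => ?_)
  have hmem : (u + φ * I : ℂ).im ∈ Icc φ π := by rw [im_add_mul_I]; exact ⟨le_rfl, hφ.2⟩
  have := norm_hankelIntegrand_le_of_norm_le hφ'.1 hmem (hk _ ⟨hφ'.1.trans hmem.1, hmem.2⟩)
  rwa [re_add_mul_I] at this

lemma tendsto_integral_vertical_atBot (hφ : φ ∈ Icc 0 π) (hy : 0 < y)
    (hk : ∀ ζ : ℂ, ζ.im ∈ Icc 0 π → ‖k ζ‖ ≤ C * rexp (y * ζ.re)) :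
    Tendsto (fun b : ℝ => ∫ v : ℝ in (0 : ℝ)..φ, hankelIntegrand k (b + v * I)) atBot (𝓝 0) := by
  have hexp : Tendsto (fun b : ℝ => rexp (rexp b)) atBot (𝓝 (rexp 0)) :=
    (Real.continuous_exp.tendsto 0).comp tendsto_exp_atBot
  have hexpy : Tendsto (fun b : ℝ => rexp (y * b)) atBot (𝓝 0) :=
    tendsto_exp_atBot.comp (tendsto_id.const_mul_atBot hy)
  have hlim := (hexp.mul (hexpy.const_mul C)).mul_const |φ - 0|
  rw [mul_zero, mul_zero, zero_mul] at hlim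
  refine squeeze_zero_norm (fun b => ?_) hlim
  refine intervalIntegral.norm_integral_le_of_norm_le_const fun v hv => ?_
  rw [uIoc_of_le hφ.1] at hv
  rw [hankelIntegrand, norm_mul, norm_cexp_cexp, re_add_mul_I, im_add_mul_I]
  have hkb := hk (b + v * I) (by rw [im_add_mul_I]; exact ⟨hv.1.le, hv.2.trans hφ.2⟩)
  rw [re_add_mul_I] at hkb
  gcongr
  exact mul_le_of_le_one_right (Real.exp_pos b).le (Real.cos_le_one v)

lemma hankelIntegral_eq_im_integral (h : IsHankelKernel k) (hφ : φ ∈ Ioc (π / 2) π) (a : ℝ)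
    (hy : 0 < y) (hk : ∀ ζ : ℂ, ζ.im ∈ Icc 0 π → ‖k ζ‖ ≤ C * rexp (y * ζ.re)) :
    hankelIntegral k φ a = (∫ u : ℝ, hankelIntegrand k (u + φ * I)).im := by
  have hray : Tendsto (fun b : ℝ => ∫ u in Ioi b, hankelIntegrand k (u + φ * I)) atBot
      (𝓝 (∫ u : ℝ, hankelIntegrand k (u + φ * I))) :=
    (aecover_Ioi tendsto_id).integral_tendsto_of_countably_generated (h.integrable hφ hy hk)
  have hlim : Tendsto (fun b : ℝ => hankelIntegral k φ b) atBot
      (𝓝 ((∫ u : ℝ, hankelIntegrand k (u + φ * I)).im + (0 : ℂ).re)) :=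
    ((Complex.continuous_im.tendsto _).comp hray).add ((Complex.continuous_re.tendsto _).comp
      (tendsto_integral_vertical_atBot ⟨nonneg_of_mem_Ioc hφ, hφ.2⟩ hy hk))
  simp only [fun b => h.hankelIntegral_congr_left hφ b a, Complex.zero_re, add_zero] at hlim
  exact tendsto_nhds_unique tendsto_const_nhds hlim

end IsHankelKernel

variable {K : ℕ → ℂ → ℂ} {b : ℕ → ℝ} {a : ℝ}

lemma hasSum_integral_Ioi_hankelIntegrand (hK : ∀ n, IsHankelKernel (K n))
    (hφ : φ ∈ Ioc (π / 2) π) (hb : Summable b)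
    (hKb : ∀ n, ∀ ζ : ℂ, a ≤ ζ.re → ζ.im ∈ Icc 0 π → ‖K n ζ‖ ≤ b n)
    (hsum : ∀ ζ : ℂ, a ≤ ζ.re → ζ.im ∈ Icc 0 π → HasSum (fun n => K n ζ) (k ζ)) :
    HasSum (fun n => ∫ u in Ioi a, hankelIntegrand (K n) (u + φ * I))
      (∫ u in Ioi a, hankelIntegrand k (u + φ * I)) := by
  have hφ' : φ ∈ Icc 0 π := ⟨nonneg_of_mem_Ioc hφ, hφ.2⟩
  have hre {u : ℝ} (hu : u ∈ Ioi a) : a ≤ (u + φ * I : ℂ).re := by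
    rw [re_add_mul_I]
    exact (mem_Ioi.1 hu).le
  refine hasSum_integral_of_dominated_convergence
    (fun n u => b n * gammaWeight (-Real.cos φ) 0 u)
    (fun n => ((hK n).continuous_ray hφ').aestronglyMeasurable)
    (fun n => (ae_restrict_mem measurableSet_Ioi).mono fun u hu => ?_)
    (.of_forall fun u => hb.mul_right _) ?_
    ((ae_restrict_mem measurableSet_Ioi).mono fun u hu =>
      (hsum _ (hre hu) (by rwa [im_add_mul_I])).mul_left _)
  · have := norm_hankelIntegrand_le (k := K n) (ζ := u + φ * I) hφ'.1
      (by rw [im_add_mul_I]; exact ⟨le_rfl, hφ.2⟩)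
    rw [re_add_mul_I] at this
    exact this.trans (mul_le_mul_of_nonneg_right (hKb n _ (hre hu) (by rwa [im_add_mul_I]))
      (gammaWeight_pos ..).le)
  · simp only [tsum_mul_right]
    exact (integrableOn_gammaWeight_Ioi (neg_cos_pos_of_mem_Ioc hφ) 0 a).const_mul _

lemma hasSum_intervalIntegral_hankelIntegrand (hK : ∀ n, IsHankelKernel (K n))
    (hφ : φ ∈ Icc 0 π) (hb : Summable b)
    (hKb : ∀ n, ∀ ζ : ℂ, a ≤ ζ.re → ζ.im ∈ Icc 0 π → ‖K n ζ‖ ≤ b n)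
    (hsum : ∀ ζ : ℂ, a ≤ ζ.re → ζ.im ∈ Icc 0 π → HasSum (fun n => K n ζ) (k ζ)) :
    HasSum (fun n => ∫ v in (0 : ℝ)..φ, hankelIntegrand (K n) (a + v * I))
      (∫ v in (0 : ℝ)..φ, hankelIntegrand k (a + v * I)) := by
  have him {v : ℝ} (hv : v ∈ uIoc 0 φ) : (a + v * I : ℂ).im ∈ Icc 0 π := by
    rw [uIoc_of_le hφ.1] at hv
    rw [im_add_mul_I]
    exact ⟨hv.1.le, hv.2.trans hφ.2⟩
  refine intervalIntegral.hasSum_integral_of_dominated_convergence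
    (fun n _ => rexp (rexp a) * b n)
    (fun n => ((hK n).intervalIntegrable a (left_mem_Icc.2 pi_pos.le)
      hφ).aestronglyMeasurable_restrict_uIoc)
    (fun n => .of_forall fun v hv => ?_) (.of_forall fun v _ => hb.mul_left _)
    intervalIntegrable_const
    (.of_forall fun v hv => (hsum _ (re_add_mul_I a v).ge (him hv)).mul_left _)
  rw [hankelIntegrand, norm_mul, norm_cexp_cexp, re_add_mul_I]
  gcongr
  · exact mul_le_of_le_one_right (Real.exp_pos a).le (Real.cos_le_one _)
  · exact hKb n _ (re_add_mul_I a v).ge (him hv)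

lemma hasSum_hankelIntegral (hK : ∀ n, IsHankelKernel (K n)) (hφ : φ ∈ Ioc (π / 2) π)
    (hb : Summable b) (hKb : ∀ n, ∀ ζ : ℂ, a ≤ ζ.re → ζ.im ∈ Icc 0 π → ‖K n ζ‖ ≤ b n)
    (hsum : ∀ ζ : ℂ, a ≤ ζ.re → ζ.im ∈ Icc 0 π → HasSum (fun n => K n ζ) (k ζ)) :
    HasSum (fun n => hankelIntegral (K n) φ a) (hankelIntegral k φ a) :=
  (Complex.hasSum_im (hasSum_integral_Ioi_hankelIntegrand hK hφ hb hKb hsum)).add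
    (Complex.hasSum_re (hasSum_intervalIntegral_hankelIntegrand hK
      ⟨nonneg_of_mem_Ioc hφ, hφ.2⟩ hb hKb hsum))

end Hankel

section ReciprocalGamma

open Complex (I)

variable {y φ : ℝ}

lemma isHankelKernel_exp (y : ℝ) : IsHankelKernel fun ζ => Complex.exp (y * ζ) := by
  refine .of_norm_le_exp (C := 1) (y := y) (fun ζ _ => by fun_prop) (fun u => ?_) (fun ζ _ => ?_)
  · rw [← Complex.ofReal_mul, ← Complex.ofReal_exp, Complex.ofReal_im]
  · rw [Complex.norm_exp, Complex.re_ofReal_mul, one_mul]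

lemma cexp_cexp_add_pi_mul_I (u : ℝ) :
    Complex.exp (Complex.exp (u + π * I)) = (rexp (-rexp u) : ℝ) := by
  rw [Complex.exp_add, Complex.exp_pi_mul_I]
  push_cast
  ring_nf

lemma hankelIntegral_exp_of_pos (hy : 0 < y) (a : ℝ) :
    hankelIntegral (fun ζ => Complex.exp (y * ζ)) π a = π / Gamma (1 - y) := by
  have hintegrand (u : ℝ) : hankelIntegrand (fun ζ => Complex.exp (y * ζ)) (u + π * I) =
      (gammaWeight 1 y u : ℝ) * Complex.exp ((π * y : ℝ) * I) := by
    rw [hankelIntegrand, cexp_cexp_add_pi_mul_I, gammaWeight, sub_eq_neg_add, Real.exp_add, one_mul,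
      Complex.ofReal_mul, mul_assoc, Complex.ofReal_exp (y * u), ← Complex.exp_add]
    push_cast
    ring_nf
  have hrefl := Gamma_mul_Gamma_one_sub y
  rw [(isHankelKernel_exp y).hankelIntegral_eq_im_integral (C := 1) (y := y)
    pi_mem_Ioc a hy
    fun ζ _ => by rw [Complex.norm_exp, Complex.re_ofReal_mul, one_mul]]
  simp only [hintegrand]
  rw [integral_mul_const, integral_complex_ofReal, Complex.im_ofReal_mul,
    Complex.exp_ofReal_mul_I_im, integral_gammaWeight one_pos hy, one_div_one, one_rpow, one_mul]
  have hΓ := (Gamma_pos_of_pos hy).ne'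
  rcases eq_or_ne (Real.sin (π * y)) 0 with hsin | hsin
  · rw [hsin, div_zero] at hrefl
    rw [hsin, (mul_eq_zero.1 hrefl).resolve_left hΓ, mul_zero, div_zero]
  · rw [eq_div_iff hsin] at hrefl
    have hΓ' : Gamma (1 - y) ≠ 0 := fun h => pi_ne_zero (by rw [← hrefl, h, mul_zero, zero_mul])
    rw [eq_div_iff hΓ']
    linear_combination hrefl

-- As `a → -∞` the contour shrinks to the negative axis and a half circle of radius `exp a`.
lemma hankelIntegral_one (a : ℝ) : hankelIntegral (fun _ => 1) π a = π := by
  have hkernel : IsHankelKernel fun _ => 1 := by simpa using isHankelKernel_exp 0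
  have hcircle (b : ℝ) : hankelIntegral (fun _ => 1) π b =
      (∫ v in (0 : ℝ)..π, Complex.exp (rexp b * Complex.exp (v * I))).re := by
    simp only [hankelIntegral, hankelIntegrand, mul_one, cexp_cexp_add_pi_mul_I]
    rw [integral_complex_ofReal, Complex.ofReal_im, zero_add]
    simp only [Complex.exp_add, Complex.ofReal_exp]
  have hcont : Continuous fun r : ℝ =>
      (∫ v in (0 : ℝ)..π, Complex.exp (r * Complex.exp (v * I))).re :=
    Complex.continuous_re.comp
      (intervalIntegral.continuous_parametric_intervalIntegral_of_continuous'
        (f := fun r v : ℝ => Complex.exp (r * Complex.exp (v * I))) (by fun_prop) 0 π)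
  have hlim := (hcont.tendsto 0).comp tendsto_exp_atBot
  simp only [Function.comp_def, ← hcircle,
    fun b => hkernel.hankelIntegral_congr_left pi_mem_Ioc b a] at hlim
  simpa using tendsto_nhds_unique tendsto_const_nhds hlim

lemma hasDerivAt_hankelIntegrand_exp (y : ℝ) (ζ : ℂ) :
    HasDerivAt (hankelIntegrand fun ζ => Complex.exp (y * ζ)) (hankelIntegrand
      (fun ζ => Complex.exp ((y + 1 : ℝ) * ζ) - (-y : ℝ) * Complex.exp (y * ζ)) ζ) ζ := by
  have hpow : HasDerivAt (fun ζ : ℂ => Complex.exp (y * ζ)) (Complex.exp (y * ζ) * y) ζ := by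
    simpa using ((hasDerivAt_id ζ).const_mul (y : ℂ)).cexp
  refine ((Complex.hasDerivAt_exp ζ).cexp.mul hpow).congr_deriv ?_
  rw [hankelIntegrand, Complex.ofReal_add, Complex.ofReal_one, add_mul, one_mul, Complex.exp_add]
  push_cast
  ring

-- Integration by parts, the analogue of `Γ(z + 1) = z Γ(z)` with `z = -y`.
lemma hankelIntegral_exp_add_one (y a : ℝ) :
    hankelIntegral (fun ζ => Complex.exp ((y + 1 : ℝ) * ζ)) π a =
      -y * hankelIntegral (fun ζ => Complex.exp (y * ζ)) π a := by
  have h₁ := isHankelKernel_exp (y + 1)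
  have h₂ := (isHankelKernel_exp y).const_mul (-y)
  have hzero := (h₁.sub h₂).hankelIntegral_eq_zero_of_hasDerivAt pi_mem_Ioc a
    (fun ζ _ => hasDerivAt_hankelIntegrand_exp y ζ)
    ((isHankelKernel_exp y).hankelIntegrand_ofReal_im a) ?_
  · rw [h₁.hankelIntegral_sub h₂ pi_mem_Ioc, hankelIntegral_const_mul] at hzero
    linarith
  · obtain ⟨C, y', hC⟩ := (isHankelKernel_exp y).exists_norm_hankelIntegrand_le pi_pos.le 0
    refine squeeze_zero_norm' ((eventually_ge_atTop 0).mono fun u hu => hC u π hu ⟨le_rfl, le_rfl⟩)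
      ?_
    simpa using (tendsto_gammaWeight_atTop (neg_cos_pos_of_mem_Ioc pi_mem_Ioc) y').const_mul C

theorem hankelIntegral_exp (y a : ℝ) :
    hankelIntegral (fun ζ => Complex.exp (y * ζ)) π a = π / Gamma (1 - y) := by
  obtain ⟨n, hn⟩ := exists_nat_gt (-y)
  induction n generalizing y with
  | zero => exact hankelIntegral_exp_of_pos (by simpa using hn) a
  | succ n ih =>
    rcases lt_trichotomy y 0 with hy | rfl | hy
    · have hstep := hankelIntegral_exp_add_one y a
      rw [ih (y + 1) (by push_cast at hn; linarith), show 1 - (y + 1) = -y by ring] at hstep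
      have hy' := (neg_pos.2 hy).ne'
      have hΓ := (Gamma_pos_of_pos (neg_pos.2 hy)).ne'
      rw [div_eq_iff hΓ] at hstep
      rw [show 1 - y = -y + 1 by ring, Gamma_add_one hy', eq_div_iff (mul_ne_zero hy' hΓ)]
      linear_combination -hstep
    · simpa using hankelIntegral_one a
    · exact hankelIntegral_exp_of_pos hy a

end ReciprocalGamma

section Kernels

open Complex (I)

variable {ρ x φ δ θ : ℝ} {w ζ : ℂ}

lemma abs_sin_le_norm_one_add (hw : Real.cos θ * ‖w‖ ≤ w.re) : |Real.sin θ| ≤ ‖1 + w‖ := by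
  refine abs_le_of_sq_le_sq' ?_ (norm_nonneg _) |> abs_le.2
  have hnorm : ‖1 + w‖ ^ 2 = 1 + 2 * w.re + ‖w‖ ^ 2 := by
    simp only [← Complex.normSq_eq_norm_sq, Complex.normSq_apply, Complex.add_re, Complex.add_im,
      Complex.one_re, Complex.one_im]
    ring
  rw [hnorm]
  nlinarith [sq_nonneg (‖w‖ + Real.cos θ), Real.sin_sq_add_cos_sq θ]

lemma div_one_add_sub_self (hw : 1 + w ≠ 0) : w / (1 + w) - w = -(w ^ 2 / (1 + w)) := by
  field_simp
  ring

lemma div_one_add_sq_sub_self (hw : 1 + w ≠ 0) :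
    w / (1 + w) ^ 2 - w = -(w ^ 2 * (1 / (1 + w) + 1 / (1 + w) ^ 2)) := by
  field_simp
  ring

lemma norm_div_one_add_sq_sub_self_le (hδ : 0 < δ) (hw : δ ≤ ‖1 + w‖) :
    ‖w / (1 + w) ^ 2 - w‖ ≤ (1 / δ + 1 / δ ^ 2) * ‖w‖ ^ 2 := by
  have hw' : 1 + w ≠ 0 := norm_pos_iff.1 (hδ.trans_le hw)
  calc ‖w / (1 + w) ^ 2 - w‖ = ‖w‖ ^ 2 * ‖1 / (1 + w) + 1 / (1 + w) ^ 2‖ := by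
        rw [div_one_add_sq_sub_self hw', norm_neg, norm_mul, norm_pow]
    _ ≤ ‖w‖ ^ 2 * (1 / ‖1 + w‖ + 1 / ‖1 + w‖ ^ 2) := by
        gcongr
        refine (norm_add_le _ _).trans_eq ?_
        rw [norm_div, norm_div, norm_one, norm_pow]
    _ ≤ (1 / δ + 1 / δ ^ 2) * ‖w‖ ^ 2 := by
        rw [mul_comm]
        gcongr

/-- The power `s ^ ρ / x` in the logarithmic variable `ζ = log s`. -/
noncomputable def scaledPow (ρ x : ℝ) (ζ : ℂ) : ℂ := (x⁻¹ : ℝ) * Complex.exp (ρ * ζ)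

/-- The kernel `s ^ ρ / (s ^ ρ + x)` in the logarithmic variable `ζ = log s`, whose Hankel integral
represents `E_ρ(-x)`. -/
noncomputable def mittagLefflerKernel (ρ x : ℝ) (ζ : ℂ) : ℂ :=
  scaledPow ρ x ζ / (1 + scaledPow ρ x ζ)

/-- What remains of `mittagLefflerKernel` when the leading term of its expansion at `x = ∞` is
removed. -/
noncomputable def remainderKernel (ρ x : ℝ) (ζ : ℂ) : ℂ :=
  mittagLefflerKernel ρ x ζ - scaledPow ρ x ζ

/-- The derivative of `remainderKernel ρ x` with respect to `ρ` when `x` depends on `ρ` with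
logarithmic derivative `T`. -/
noncomputable def derivKernel (ρ x T : ℝ) (ζ : ℂ) : ℂ :=
  (ζ - T) * (scaledPow ρ x ζ / (1 + scaledPow ρ x ζ) ^ 2 - scaledPow ρ x ζ)

lemma scaledPow_ofReal (ρ x u : ℝ) : scaledPow ρ x u = (x⁻¹ * rexp (ρ * u) : ℝ) := by
  rw [scaledPow]
  push_cast
  rfl

lemma norm_scaledPow (hx : 0 ≤ x) (ρ : ℝ) (ζ : ℂ) :
    ‖scaledPow ρ x ζ‖ = x⁻¹ * rexp (ρ * ζ.re) := by
  rw [scaledPow, norm_mul, Complex.norm_exp, Complex.re_ofReal_mul, Complex.norm_real,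
    Real.norm_of_nonneg (inv_nonneg.2 hx)]

lemma re_scaledPow (hx : 0 ≤ x) (ρ : ℝ) (ζ : ℂ) :
    (scaledPow ρ x ζ).re = ‖scaledPow ρ x ζ‖ * Real.cos (ρ * ζ.im) := by
  rw [norm_scaledPow hx, scaledPow, Complex.re_ofReal_mul, Complex.exp_re, Complex.re_ofReal_mul,
    Complex.im_ofReal_mul, mul_assoc]

lemma im_scaledPow (hx : 0 ≤ x) (ρ : ℝ) (ζ : ℂ) :
    (scaledPow ρ x ζ).im = ‖scaledPow ρ x ζ‖ * Real.sin (ρ * ζ.im) := by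
  rw [norm_scaledPow hx, scaledPow, Complex.im_ofReal_mul, Complex.exp_im, Complex.re_ofReal_mul,
    Complex.im_ofReal_mul, mul_assoc]

lemma re_scaledPow_nonneg (hx : 0 ≤ x) (hζ : ρ * ζ.im ∈ Icc 0 (π / 2)) :
    0 ≤ (scaledPow ρ x ζ).re := by
  rw [re_scaledPow hx]
  exact mul_nonneg (norm_nonneg _) (cos_nonneg_of_mem_Icc ⟨by linarith [hζ.1, pi_pos], hζ.2⟩)

lemma im_scaledPow_mem_Icc (hx : 0 ≤ x) (hζ : ρ * ζ.im ∈ Icc 0 π) :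
    (scaledPow ρ x ζ).im ∈ Icc 0 (ρ * ζ.im * ‖scaledPow ρ x ζ‖) := by
  rw [im_scaledPow hx, mul_comm (ρ * ζ.im)]
  exact ⟨mul_nonneg (norm_nonneg _) (sin_nonneg_of_mem_Icc hζ),
    mul_le_mul_of_nonneg_left (sin_le hζ.1) (norm_nonneg _)⟩

lemma sin_le_norm_one_add_scaledPow (hρ : 0 ≤ ρ) (hx : 0 ≤ x) (hζ : 0 ≤ ζ.im)
    (hζθ : ρ * ζ.im ≤ θ) (hθ : θ ≤ π) : Real.sin θ ≤ ‖1 + scaledPow ρ x ζ‖ := by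
  refine (le_abs_self _).trans (abs_sin_le_norm_one_add ?_)
  rw [re_scaledPow hx, mul_comm]
  gcongr
  exact cos_le_cos_of_nonneg_of_le_pi (by positivity) hθ hζθ

lemma sin_mul_pi_pos (h₀ : 0 < θ) (h₁ : θ < 1) : 0 < Real.sin (θ * π) :=
  sin_pos_of_pos_of_lt_pi (mul_pos h₀ pi_pos) (mul_lt_of_lt_one_left pi_pos h₁)

lemma sin_mul_pi_le_norm_one_add_scaledPow (hρ : 0 ≤ ρ) (hρθ : ρ ≤ θ) (hθ : θ ≤ 1) (hx : 0 ≤ x)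
    (hζ : ζ.im ∈ Icc 0 π) : Real.sin (θ * π) ≤ ‖1 + scaledPow ρ x ζ‖ :=
  sin_le_norm_one_add_scaledPow hρ hx hζ.1 (mul_le_mul hρθ hζ.2 hζ.1 (hρ.trans hρθ))
    (mul_le_of_le_one_left pi_pos.le hθ)

lemma exists_pos_le_norm_one_add_scaledPow (hρ : ρ ∈ Ioo 0 1) (hx : 0 ≤ x) :
    ∃ δ > 0, ∀ ζ : ℂ, ζ.im ∈ Icc 0 π → δ ≤ ‖1 + scaledPow ρ x ζ‖ :=
  ⟨_, sin_mul_pi_pos hρ.1 hρ.2,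
    fun _ => sin_mul_pi_le_norm_one_add_scaledPow hρ.1.le le_rfl hρ.2.le hx⟩

lemma isHankelKernel_mittagLefflerKernel (hρ : ρ ∈ Ioo 0 1) (hx : 0 ≤ x) :
    IsHankelKernel (mittagLefflerKernel ρ x) := by
  obtain ⟨δ, hδ, hle⟩ := exists_pos_le_norm_one_add_scaledPow hρ hx
  refine .of_norm_le_exp (C := x⁻¹ / δ) (y := ρ) (fun ζ hζ => ?_) (fun u => ?_) (fun ζ hζ => ?_)
  · have hne : 1 + scaledPow ρ x ζ ≠ 0 := norm_pos_iff.1 (hδ.trans_le (hle ζ hζ))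
    have hd : DifferentiableAt ℂ (scaledPow ρ x) ζ := by unfold scaledPow; fun_prop
    exact hd.div (hd.const_add 1) hne
  · rw [mittagLefflerKernel, scaledPow_ofReal, ← Complex.ofReal_one, ← Complex.ofReal_add,
      ← Complex.ofReal_div, Complex.ofReal_im]
  · rw [mittagLefflerKernel, norm_div, norm_scaledPow hx, div_mul_eq_mul_div]
    gcongr
    exact hle ζ hζ

lemma isHankelKernel_remainderKernel (hρ : ρ ∈ Ioo 0 1) (hx : 0 ≤ x) :
    IsHankelKernel (remainderKernel ρ x) :=
  (isHankelKernel_mittagLefflerKernel hρ hx).sub ((isHankelKernel_exp ρ).const_mul x⁻¹)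

lemma exists_norm_remainderKernel_le (hρ : ρ ∈ Ioo 0 1) (hx : 0 ≤ x) :
    ∃ C : ℝ, ∀ ζ : ℂ, ζ.im ∈ Icc 0 π → ‖remainderKernel ρ x ζ‖ ≤ C * rexp (2 * ρ * ζ.re) := by
  obtain ⟨δ, hδ, hle⟩ := exists_pos_le_norm_one_add_scaledPow hρ hx
  refine ⟨x⁻¹ ^ 2 / δ, fun ζ hζ => ?_⟩
  have hne : 1 + scaledPow ρ x ζ ≠ 0 := norm_pos_iff.1 (hδ.trans_le (hle ζ hζ))
  rw [remainderKernel, mittagLefflerKernel, div_one_add_sub_self hne, norm_neg, norm_div, norm_pow,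
    norm_scaledPow hx, mul_pow, ← Real.exp_nat_mul, div_mul_eq_mul_div, Nat.cast_ofNat, mul_assoc 2]
  gcongr
  exact hle ζ hζ

lemma neg_pow_mul_exp_eq_neg_inv_scaledPow_pow (ρ x : ℝ) (n : ℕ) (ζ : ℂ) :
    (((-x) ^ n : ℝ) : ℂ) * Complex.exp ((-(ρ * n) : ℝ) * ζ) = (-(scaledPow ρ x ζ)⁻¹) ^ n := by
  rw [scaledPow, mul_inv, Complex.ofReal_inv, inv_inv, ← Complex.exp_neg, ← neg_mul (x : ℂ),
    mul_pow, ← Complex.exp_nat_mul]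
  push_cast
  ring_nf

lemma norm_neg_inv_scaledPow_le_half (hx : 0 < x) (hζ : 2 * x ≤ rexp (ρ * ζ.re)) :
    ‖-(scaledPow ρ x ζ)⁻¹‖ ≤ 1 / 2 := by
  rw [norm_neg, norm_inv, norm_scaledPow hx.le, mul_inv, inv_inv, ← div_eq_mul_inv,
    div_le_iff₀ (Real.exp_pos _)]
  linarith

lemma hasSum_mittagLefflerKernel (hx : 0 < x) (hζ : 2 * x ≤ rexp (ρ * ζ.re)) :
    HasSum (fun n : ℕ => (((-x) ^ n : ℝ) : ℂ) * Complex.exp ((-(ρ * n) : ℝ) * ζ))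
      (mittagLefflerKernel ρ x ζ) := by
  have hne : scaledPow ρ x ζ ≠ 0 := by
    rw [← norm_pos_iff, norm_scaledPow hx.le]
    positivity
  have hlim : (1 - -(scaledPow ρ x ζ)⁻¹)⁻¹ = mittagLefflerKernel ρ x ζ := by
    rw [mittagLefflerKernel, sub_neg_eq_add, ← inv_inj, inv_inv, inv_div, add_div, div_self hne,
      one_div, add_comm]
  simp only [neg_pow_mul_exp_eq_neg_inv_scaledPow_pow, ← hlim]
  exact hasSum_geometric_of_norm_lt_one
    ((norm_neg_inv_scaledPow_le_half hx hζ).trans_lt one_half_lt_one)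

theorem hankelIntegral_mittagLefflerKernel (hρ : ρ ∈ Ioo 0 1) (hx : 0 < x) (a : ℝ) :
    hankelIntegral (mittagLefflerKernel ρ x) π a = π * mittagLeffler ρ (-x) := by
  obtain ⟨b, hb⟩ : ∃ b : ℝ, rexp (ρ * b) = 2 * x :=
    ⟨Real.log (2 * x) / ρ, by rw [mul_div_cancel₀ _ hρ.1.ne', Real.exp_log (by positivity)]⟩
  have hlarge {ζ : ℂ} (hζ : b ≤ ζ.re) : 2 * x ≤ rexp (ρ * ζ.re) :=
    hb.symm.le.trans (Real.exp_le_exp.2 (mul_le_mul_of_nonneg_left hζ hρ.1.le))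
  have hsum := hasSum_hankelIntegral (a := b) (b := fun n : ℕ => (1 / 2) ^ n)
    (fun n : ℕ => (isHankelKernel_exp (-(ρ * n))).const_mul ((-x) ^ n)) pi_mem_Ioc
    summable_geometric_two
    (fun n ζ hζ _ => ?_) (fun ζ hζ _ => hasSum_mittagLefflerKernel hx (hlarge hζ))
  · rw [(isHankelKernel_mittagLefflerKernel hρ hx.le).hankelIntegral_congr_left pi_mem_Ioc a b,
      ← hsum.tsum_eq, mittagLeffler, ← tsum_mul_left]
    refine tsum_congr fun n => ?_
    rw [hankelIntegral_const_mul, hankelIntegral_exp, sub_neg_eq_add, add_comm 1]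
    ring
  · rw [neg_pow_mul_exp_eq_neg_inv_scaledPow_pow, norm_pow]
    gcongr
    exact norm_neg_inv_scaledPow_le_half hx (hlarge hζ)

theorem mittagLeffler_neg_eq_add_integral (hρ : ρ ∈ Ioo 0 1) (hx : 0 < x)
    (hφ : φ ∈ Ioc (π / 2) π) :
    mittagLeffler ρ (-x) = 1 / (x * Gamma (1 - ρ)) +
      1 / π * (∫ u : ℝ, hankelIntegrand (remainderKernel ρ x) (u + φ * I)).im := by
  have hker := isHankelKernel_remainderKernel hρ hx.le
  obtain ⟨C, hC⟩ := exists_norm_remainderKernel_le hρ hx.le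
  have hsub : hankelIntegral (remainderKernel ρ x) π 0 =
      hankelIntegral (mittagLefflerKernel ρ x) π 0 - hankelIntegral (scaledPow ρ x) π 0 :=
    (isHankelKernel_mittagLefflerKernel hρ hx.le).hankelIntegral_sub
      ((isHankelKernel_exp ρ).const_mul x⁻¹) pi_mem_Ioc 0
  have hpow : hankelIntegral (scaledPow ρ x) π 0 = x⁻¹ * (π / Gamma (1 - ρ)) :=
    (hankelIntegral_const_mul x⁻¹ _ π 0).trans (by rw [hankelIntegral_exp])
  rw [← hker.hankelIntegral_eq_im_integral hφ 0 (mul_pos two_pos hρ.1) hC,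
    ← hker.hankelIntegral_pi hφ, hsub, hpow, hankelIntegral_mittagLefflerKernel hρ hx]
  have := pi_ne_zero
  field_simp
  ring

end Kernels

section Derivative

open Complex (I)

variable {ρ x φ δ lam t : ℝ} {ζ : ℂ}

lemma scaledPow_mul_rpow (ht : 0 < t) (r lam : ℝ) (ζ : ℂ) :
    scaledPow r (lam * t ^ r) ζ = (lam⁻¹ : ℝ) * Complex.exp (r * (ζ - Real.log t)) := by
  rw [scaledPow, mul_inv, ← rpow_neg ht.le, rpow_def_of_pos ht, Complex.ofReal_mul, mul_assoc,
    Complex.ofReal_exp, ← Complex.exp_add]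
  push_cast
  ring_nf

lemma hasDerivAt_scaledPow (ht : 0 < t) (ρ lam : ℝ) (ζ : ℂ) :
    HasDerivAt (fun r : ℝ => scaledPow r (lam * t ^ r) ζ)
      ((ζ - Real.log t) * scaledPow ρ (lam * t ^ ρ) ζ) ρ := by
  simp only [scaledPow_mul_rpow ht]
  have hexp := (((hasDerivAt_id (ρ : ℂ)).mul_const (ζ - Real.log t)).cexp.const_mul
    ((lam⁻¹ : ℝ) : ℂ)).comp_ofReal
  refine hexp.congr_deriv ?_
  simp only [id_eq]
  ring

lemma hasDerivAt_hankelIntegrand_remainderKernel (ht : 0 < t)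
    (hζ : 1 + scaledPow ρ (lam * t ^ ρ) ζ ≠ 0) :
    HasDerivAt (fun r : ℝ => hankelIntegrand (remainderKernel r (lam * t ^ r)) ζ)
      (hankelIntegrand (derivKernel ρ (lam * t ^ ρ) (Real.log t)) ζ) ρ := by
  have hw := hasDerivAt_scaledPow ht ρ lam ζ
  refine (((hw.div (hw.const_add 1) hζ).sub hw).const_mul _).congr_deriv ?_
  rw [hankelIntegrand, derivKernel]
  field_simp
  ring

lemma norm_hankelIntegrand_derivKernel_le (hx : 0 < x) (hδ : 0 < δ) (hφ : φ ∈ Icc 0 π) (T u : ℝ)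
    (hw : δ ≤ ‖1 + scaledPow ρ x (u + φ * I)‖) :
    ‖hankelIntegrand (derivKernel ρ x T) (u + φ * I)‖ ≤ (1 / δ + 1 / δ ^ 2) / x ^ 2 *
      ((|T| + φ + |u|) * gammaWeight (-Real.cos φ) (2 * ρ) u) := by
  have hlog : ‖(u + φ * I - T : ℂ)‖ ≤ |T| + φ + |u| := by
    calc ‖(u + φ * I - T : ℂ)‖ ≤ ‖(u : ℂ)‖ + ‖(φ * I : ℂ)‖ + ‖(T : ℂ)‖ :=
          (norm_sub_le _ _).trans (by gcongr; exact norm_add_le _ _)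
      _ = |T| + φ + |u| := by
        rw [norm_mul, Complex.norm_I, mul_one, Complex.norm_real, Complex.norm_real,
          Complex.norm_real, Real.norm_of_nonneg hφ.1, Real.norm_eq_abs, Real.norm_eq_abs]
        ring
  have hker : ‖derivKernel ρ x T (u + φ * I)‖ ≤
      (1 / δ + 1 / δ ^ 2) / x ^ 2 * (|T| + φ + |u|) * rexp (2 * ρ * u) := by
    calc ‖derivKernel ρ x T (u + φ * I)‖
        ≤ (|T| + φ + |u|) * ((1 / δ + 1 / δ ^ 2) * ‖scaledPow ρ x (u + φ * I)‖ ^ 2) := by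
          rw [derivKernel, norm_mul]
          exact mul_le_mul hlog (norm_div_one_add_sq_sub_self_le hδ hw) (norm_nonneg _)
            ((norm_nonneg _).trans hlog)
      _ = (1 / δ + 1 / δ ^ 2) / x ^ 2 * (|T| + φ + |u|) * rexp (2 * ρ * u) := by
          rw [norm_scaledPow hx.le, re_add_mul_I, mul_pow, ← Real.exp_nat_mul, Nat.cast_ofNat,
            mul_assoc 2]
          ring
  have h := norm_hankelIntegrand_le_of_norm_le (k := derivKernel ρ x T) (ζ := u + φ * I)
    (y := 2 * ρ) hφ.1 (by rw [im_add_mul_I]; exact ⟨le_rfl, hφ.2⟩) (by rwa [re_add_mul_I])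
  rwa [re_add_mul_I, mul_assoc] at h

lemma exists_eventually_norm_hankelIntegrand_derivKernel_le (hρ : ρ ∈ Ioo 0 1)
    (hlam : 0 < lam) (ht : 0 < t) (hφ : φ ∈ Icc 0 π) (T : ℝ) :
    ∃ C : ℝ, ∀ᶠ r in 𝓝 ρ, ∀ u : ℝ, ‖hankelIntegrand (derivKernel r (lam * t ^ r) T) (u + φ * I)‖ ≤
      C * ((|T| + φ + |u|) * gammaWeight (-Real.cos φ) ρ u +
        (|T| + φ + |u|) * gammaWeight (-Real.cos φ) (1 + ρ) u) := by
  obtain ⟨hρ₀, hρ₁⟩ := hρ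
  have hφ₀ := hφ.1
  set δ := Real.sin ((1 + ρ) / 2 * π)
  have hδ : 0 < δ := sin_mul_pi_pos (by linarith) (by linarith)
  have hx : 0 < lam * t ^ ρ := mul_pos hlam (rpow_pos_of_pos ht ρ)
  have hlarge : ∀ᶠ r in 𝓝 ρ, lam * t ^ ρ / 2 < lam * t ^ r :=
    (continuousAt_const.mul (continuousAt_const_rpow ht.ne')).eventually_const_lt
      (half_lt_self hx)
  refine ⟨(1 / δ + 1 / δ ^ 2) / (lam * t ^ ρ / 2) ^ 2, ?_⟩
  filter_upwards [hlarge, Ioo_mem_nhds (show ρ / 2 < ρ by linarith)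
    (show ρ < (1 + ρ) / 2 by linarith)] with r hxr hr u
  have hxr₀ : 0 < lam * t ^ r := mul_pos hlam (rpow_pos_of_pos ht r)
  have hden : δ ≤ ‖1 + scaledPow r (lam * t ^ r) (u + φ * I)‖ :=
    sin_mul_pi_le_norm_one_add_scaledPow (by linarith [hr.1]) hr.2.le (by linarith) hxr₀.le
      (by rwa [im_add_mul_I])
  refine (norm_hankelIntegrand_derivKernel_le hxr₀ hδ hφ T u hden).trans ?_
  rw [← mul_add]
  gcongr
  · exact mul_nonneg (by positivity) (gammaWeight_pos ..).le
  · exact gammaWeight_le_add _ u ⟨by linarith [hr.1], by linarith [hr.2]⟩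

lemma measurable_hankelIntegrand_derivKernel (ρ x T φ : ℝ) :
    Measurable fun u : ℝ => hankelIntegrand (derivKernel ρ x T) (u + φ * I) := by
  unfold hankelIntegrand derivKernel scaledPow
  fun_prop

lemma hasDerivAt_integral_remainderKernel (hρ : ρ ∈ Ioo 0 1) (hlam : 0 < lam) (ht : 0 < t)
    (hφ : φ ∈ Ioc (π / 2) π) :
    HasDerivAt (fun r : ℝ => ∫ u : ℝ, hankelIntegrand (remainderKernel r (lam * t ^ r)) (u + φ * I))
      (∫ u : ℝ, hankelIntegrand (derivKernel ρ (lam * t ^ ρ) (Real.log t)) (u + φ * I)) ρ := by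
  have hφ' : φ ∈ Icc 0 π := ⟨nonneg_of_mem_Ioc hφ, hφ.2⟩
  have hc := neg_cos_pos_of_mem_Ioc hφ
  have hx (r : ℝ) : 0 ≤ lam * t ^ r := (mul_pos hlam (rpow_pos_of_pos ht r)).le
  have hmem : Ioo 0 1 ∈ 𝓝 ρ := Ioo_mem_nhds hρ.1 hρ.2
  obtain ⟨C, hC⟩ :=
    exists_eventually_norm_hankelIntegrand_derivKernel_le hρ hlam ht hφ' (Real.log t)
  refine (hasDerivAt_integral_of_dominated_loc_of_deriv_le (inter_mem hmem hC)
    (F := fun r (u : ℝ) => hankelIntegrand (remainderKernel r (lam * t ^ r)) (u + φ * I))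
    (F' := fun r (u : ℝ) => hankelIntegrand (derivKernel r (lam * t ^ r) (Real.log t)) (u + φ * I))
    ?_ ?_ (measurable_hankelIntegrand_derivKernel ..).aestronglyMeasurable
    (.of_forall fun u r hr => hr.2 u) ?_ (.of_forall fun u r hr => ?_)).2
  · filter_upwards [hmem] with r hr
    exact ((isHankelKernel_remainderKernel hr (hx r)).continuous_ray hφ').aestronglyMeasurable
  · obtain ⟨C', hC'⟩ := exists_norm_remainderKernel_le hρ (hx ρ)
    exact (isHankelKernel_remainderKernel hρ (hx ρ)).integrable hφ (mul_pos two_pos hρ.1) hC'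
  · exact ((integrable_add_abs_mul_gammaWeight _ hc hρ.1).add
      (integrable_add_abs_mul_gammaWeight _ hc (by linarith [hρ.1]))).const_mul _
  · obtain ⟨δ, hδ, hle⟩ := exists_pos_le_norm_one_add_scaledPow hr.1 (hx r)
    exact hasDerivAt_hankelIntegrand_remainderKernel ht
      (norm_pos_iff.1 (hδ.trans_le (hle _ (by rwa [im_add_mul_I]))))

lemma hasDerivAt_inv_mul_Gamma (hρ : ρ < 1) (hlam : lam ≠ 0) (ht : 0 < t) :
    HasDerivAt (fun r : ℝ => 1 / (lam * t ^ r * Gamma (1 - r)))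
      (-(1 + (1 - ρ) * (Real.log t - logDeriv Gamma (2 - ρ))) /
        (lam * t ^ ρ * Gamma (2 - ρ))) ρ := by
  have hΓ : Gamma (2 - ρ) ≠ 0 := (Gamma_pos_of_pos (by linarith)).ne'
  have hshift : ∀ᶠ r in 𝓝 ρ, 1 / (lam * t ^ r * Gamma (1 - r)) =
      (1 - r) / (lam * t ^ r * Gamma (2 - r)) := by
    filter_upwards [Iio_mem_nhds hρ] with r hr
    have hr' : 1 - r ≠ 0 := (sub_pos.2 hr).ne'
    rw [show 2 - r = 1 - r + 1 by ring, Gamma_add_one hr', mul_left_comm,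
      div_mul_cancel_left₀ hr', one_div]
  have hGamma : HasDerivAt (fun r => Gamma (2 - r)) (-deriv Gamma (2 - ρ)) ρ := by
    have hdiff : DifferentiableAt ℝ Gamma (2 - ρ) := differentiableAt_Gamma fun m => by
      have : (0 : ℝ) ≤ m := m.cast_nonneg
      linarith
    simpa using hdiff.hasDerivAt.comp_const_sub 2 ρ
  have hpow := ((hasStrictDerivAt_const_rpow ht ρ).hasDerivAt.const_mul lam).mul hGamma
  have hlin := (hasDerivAt_id ρ).const_sub 1
  have hpos := (rpow_pos_of_pos ht ρ).ne'
  refine ((hlin.div hpow (mul_ne_zero (mul_ne_zero hlam hpos) hΓ)).congr_of_eventuallyEq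
    hshift).congr_deriv ?_
  simp only [id_eq, logDeriv_apply, Pi.mul_apply]
  field_simp
  ring

lemma neg_div_mul_Gamma_two_sub_le (hρ₀ : 0 ≤ ρ) (hρ₁ : ρ < 1) (hx : 0 < x) (ht : 1 ≤ t) :
    -(1 + (1 - ρ) * (Real.log t - logDeriv Gamma (2 - ρ))) / (x * Gamma (2 - ρ)) ≤
      -((1 + ρ) / (2 * x)) := by
  have hΓ := Gamma_pos_of_pos (show 0 < 2 - ρ by linarith)
  have hψ := logDeriv_Gamma_le_half (s := 2 - ρ) (by linarith) (by linarith)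
  have hnum : (1 + ρ) / 2 ≤ 1 + (1 - ρ) * (Real.log t - logDeriv Gamma (2 - ρ)) := by
    nlinarith [Real.log_nonneg ht]
  rw [neg_div, neg_le_neg_iff, ← div_div]
  exact div_le_div₀ (by linarith) hnum (mul_pos hx hΓ)
    (mul_le_of_le_one_right hx.le (Gamma_le_one_of_mem_Icc ⟨by linarith, by linarith⟩))

end Derivative

section Estimates

open Complex (I)

variable {ρ x : ℝ} {w : ℂ}

lemma im_div_one_add_sq (w : ℂ) :
    (w / (1 + w) ^ 2).im = w.im * (1 - ‖w‖ ^ 2) / (‖1 + w‖ ^ 2) ^ 2 := by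
  rw [Complex.div_im, map_pow, ← Complex.normSq_eq_norm_sq, ← Complex.normSq_eq_norm_sq, ← sub_div,
    Complex.normSq_apply w, pow_two (1 + w)]
  simp only [Complex.mul_re, Complex.mul_im, Complex.add_re, Complex.add_im, Complex.one_re,
    Complex.one_im]
  ring

lemma abs_im_div_one_add_sq_sub_self_le (hre : 0 ≤ w.re) (him : 0 ≤ w.im) :
    |(w / (1 + w) ^ 2 - w).im| ≤ 4 * w.im * ‖w‖ := by
  set r := ‖w‖
  set m := ‖1 + w‖ ^ 2
  have hr : 0 ≤ r := norm_nonneg w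
  have hm : m = 1 + 2 * w.re + r ^ 2 := by
    simp only [m, r, ← Complex.normSq_eq_norm_sq, Complex.normSq_apply, Complex.add_re,
      Complex.add_im, Complex.one_re, Complex.one_im]
    ring
  have hm₁ : 1 + r ^ 2 ≤ m := by linarith
  have hm₂ : m ≤ (1 + r) ^ 2 := by linarith [Complex.re_le_norm w]
  have hm₀ : 0 < m ^ 2 := pow_pos (lt_of_lt_of_le (by positivity) hm₁) 2
  have hle : (1 - r ^ 2) / m ^ 2 ≤ 1 := by
    rw [div_le_one hm₀]
    nlinarith
  have hge : 1 - 4 * r ≤ (1 - r ^ 2) / m ^ 2 := by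
    rw [le_div_iff₀ hm₀]
    rcases le_total (4 * r) 1 with h | h
    · calc (1 - 4 * r) * m ^ 2 ≤ (1 - 4 * r) * ((1 + r) ^ 2) ^ 2 := by gcongr
        _ = 1 - r ^ 2 - r ^ 2 * (1 + r) * (9 + 11 * r + 4 * r ^ 2) := by ring
        _ ≤ 1 - r ^ 2 := sub_le_self _ (by positivity)
    · calc (1 - 4 * r) * m ^ 2 ≤ (1 - 4 * r) * (1 + r ^ 2) :=
            mul_le_mul_of_nonpos_left (by nlinarith) (by linarith)
        _ = 1 - r ^ 2 - 2 * r * (2 * (r - 1 / 4) ^ 2 + 15 / 8) := by ring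
        _ ≤ 1 - r ^ 2 := sub_le_self _ (by positivity)
  rw [Complex.sub_im, im_div_one_add_sq, mul_div_assoc, abs_sub_comm, ← mul_one_sub, abs_mul,
    abs_of_nonneg him, abs_of_nonneg (sub_nonneg.2 hle)]
  nlinarith

lemma abs_im_derivKernel_pi_le (hρ : ρ ∈ Ioc 0 (1 / 2)) (hx : 0 < x) (T u : ℝ) :
    |(derivKernel ρ x T (u + π * I)).im| ≤
      4 * ρ * π * (|T| + 1 / (2 * ρ) + |u|) * ‖scaledPow ρ x (u + π * I)‖ ^ 2 := by
  obtain ⟨hρ₀, hρ₁⟩ := hρ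
  have hζ : ρ * (u + π * I : ℂ).im ∈ Icc 0 (π / 2) := by
    rw [im_add_mul_I]
    exact ⟨by positivity, by nlinarith [pi_pos]⟩
  have hre := re_scaledPow_nonneg hx.le hζ
  obtain ⟨him₀, him₁⟩ := im_scaledPow_mem_Icc hx.le ⟨hζ.1, by linarith [hζ.2, pi_pos]⟩
  rw [im_add_mul_I] at him₁
  set w := scaledPow ρ x (u + π * I) with hw
  have hqim : |(w / (1 + w) ^ 2 - w).im| ≤ 4 * ρ * π * ‖w‖ ^ 2 := by
    nlinarith [abs_im_div_one_add_sq_sub_self_le hre him₀, norm_nonneg w]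
  have hqre : |(w / (1 + w) ^ 2 - w).re| ≤ 2 * ‖w‖ ^ 2 := by
    have hden : 1 ≤ ‖1 + w‖ := by
      refine le_trans ?_ (Complex.re_le_norm _)
      rw [Complex.add_re, Complex.one_re]
      linarith
    have := norm_div_one_add_sq_sub_self_le one_pos hden
    norm_num at this
    exact (Complex.abs_re_le_norm _).trans (by linarith)
  calc |(derivKernel ρ x T (u + π * I)).im|
      = |(u - T) * (w / (1 + w) ^ 2 - w).im + π * (w / (1 + w) ^ 2 - w).re| := by
        rw [derivKernel, ← hw, Complex.mul_im, Complex.sub_re _ (T : ℂ), Complex.sub_im _ (T : ℂ),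
          re_add_mul_I, im_add_mul_I, Complex.ofReal_re, Complex.ofReal_im, sub_zero]
    _ ≤ (|u| + |T|) * (4 * ρ * π * ‖w‖ ^ 2) + π * (2 * ‖w‖ ^ 2) := by
        refine (abs_add_le _ _).trans ?_
        rw [abs_mul, abs_mul, abs_of_pos pi_pos]
        gcongr
        exact abs_sub u T
    _ = 4 * ρ * π * (|T| + 1 / (2 * ρ) + |u|) * ‖w‖ ^ 2 := by
        field_simp
        ring

lemma abs_im_hankelIntegrand_derivKernel_pi_le (hρ : ρ ∈ Ioc 0 (1 / 2)) (hx : 0 < x) (T u : ℝ) :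
    |(hankelIntegrand (derivKernel ρ x T) (u + π * I)).im| ≤
      4 * ρ * π / x ^ 2 * ((|T| + 1 / (2 * ρ) + |u|) * gammaWeight 1 (2 * ρ) u) := by
  have hexp : rexp (-rexp u) = gammaWeight 1 0 u := by rw [gammaWeight]; ring_nf
  rw [hankelIntegrand, cexp_cexp_add_pi_mul_I, hexp, Complex.im_ofReal_mul, abs_mul,
    abs_of_pos (gammaWeight_pos ..)]
  calc gammaWeight 1 0 u * |(derivKernel ρ x T (u + π * I)).im|
      ≤ gammaWeight 1 0 u * (4 * ρ * π * (|T| + 1 / (2 * ρ) + |u|) *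
          ‖scaledPow ρ x (u + π * I)‖ ^ 2) :=
        mul_le_mul_of_nonneg_left (abs_im_derivKernel_pi_le hρ hx T u) (gammaWeight_pos ..).le
    _ = 4 * ρ * π / x ^ 2 * ((|T| + 1 / (2 * ρ) + |u|) *
          (rexp (2 * ρ * u) * gammaWeight 1 0 u)) := by
        rw [norm_scaledPow hx.le, re_add_mul_I, mul_pow, ← Real.exp_nat_mul, Nat.cast_ofNat,
          ← mul_assoc 2]
        ring
    _ = _ := by rw [exp_mul_gammaWeight, zero_add]

lemma integrable_hankelIntegrand_derivKernel (hρ : ρ ∈ Ioo 0 1) (hx : 0 < x) {φ : ℝ}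
    (hφ : φ ∈ Ioc (π / 2) π) (T : ℝ) :
    Integrable fun u : ℝ => hankelIntegrand (derivKernel ρ x T) (u + φ * I) := by
  have hφ' : φ ∈ Icc 0 π := ⟨nonneg_of_mem_Ioc hφ, hφ.2⟩
  obtain ⟨δ, hδ, hle⟩ := exists_pos_le_norm_one_add_scaledPow hρ hx.le
  exact Integrable.mono' ((integrable_add_abs_mul_gammaWeight _ (neg_cos_pos_of_mem_Ioc hφ)
    (mul_pos two_pos hρ.1)).const_mul _)
    (measurable_hankelIntegrand_derivKernel ..).aestronglyMeasurable (.of_forall fun u =>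
      norm_hankelIntegrand_derivKernel_le hx hδ hφ' T u (hle _ (by rwa [im_add_mul_I])))

lemma integral_add_abs_mul_gammaWeight_one_le (hρ : ρ ∈ Ioc 0 (1 / 2)) {A : ℝ} (hA : 0 ≤ A) :
    ∫ u, (A + |u|) * gammaWeight 1 (2 * ρ) u ≤ A / (2 * ρ) + 5 / (3 * ρ ^ 2) := by
  obtain ⟨hρ₀, hρ₁⟩ := hρ
  refine (integral_add_abs_mul_gammaWeight_le A one_pos (mul_pos two_pos hρ₀)).trans ?_
  have h₂ := Gamma_le_one_div (s := 2 * ρ) (by linarith) (by linarith)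
  have h₃ := Gamma_le_two_div (s := 3 / 2 * (2 * ρ)) (by linarith) (by linarith)
  have h₁ := Gamma_le_one_div (s := 2 * ρ / 2) (by linarith) (by linarith)
  simp only [div_one, one_rpow, one_mul]
  calc A * Gamma (2 * ρ) + 2 / (2 * ρ) * (Gamma (3 / 2 * (2 * ρ)) + Gamma (2 * ρ / 2))
      ≤ A * (1 / (2 * ρ)) + 2 / (2 * ρ) * (2 / (3 / 2 * (2 * ρ)) + 1 / (2 * ρ / 2)) := by gcongr
    _ = A / (2 * ρ) + 5 / (3 * ρ ^ 2) := by
        field_simp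
        ring

lemma abs_im_integral_derivKernel_pi_le (hρ : ρ ∈ Ioc 0 (1 / 2)) (hx : 0 < x) (T : ℝ) :
    |(∫ u : ℝ, hankelIntegrand (derivKernel ρ x T) (u + π * I)).im| ≤
      π / x ^ 2 * (2 * |T| + 23 / (3 * ρ)) := by
  obtain ⟨hρ₀, hρ₁⟩ := hρ
  have hint := integrable_hankelIntegrand_derivKernel ⟨hρ₀, by linarith⟩ hx pi_mem_Ioc T
  have him : (∫ u : ℝ, hankelIntegrand (derivKernel ρ x T) (u + π * I)).im =
      ∫ u : ℝ, (hankelIntegrand (derivKernel ρ x T) (u + π * I)).im := (integral_im hint).symm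
  rw [him, ← Real.norm_eq_abs]
  calc ‖∫ u : ℝ, (hankelIntegrand (derivKernel ρ x T) (u + π * I)).im‖
      ≤ ∫ u : ℝ, 4 * ρ * π / x ^ 2 *
          ((|T| + 1 / (2 * ρ) + |u|) * gammaWeight 1 (2 * ρ) u) :=
        norm_integral_le_of_norm_le ((integrable_add_abs_mul_gammaWeight _ one_pos
          (mul_pos two_pos hρ₀)).const_mul _) (.of_forall fun u =>
            abs_im_hankelIntegrand_derivKernel_pi_le ⟨hρ₀, hρ₁⟩ hx T u)
    _ ≤ 4 * ρ * π / x ^ 2 * ((|T| + 1 / (2 * ρ)) / (2 * ρ) + 5 / (3 * ρ ^ 2)) := by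
        rw [integral_const_mul]
        gcongr
        exact integral_add_abs_mul_gammaWeight_one_le ⟨hρ₀, hρ₁⟩ (by positivity)
    _ = π / x ^ 2 * (2 * |T| + 23 / (3 * ρ)) := by
        field_simp
        ring

lemma integral_add_abs_mul_gammaWeight_half_le {A s : ℝ} (hA : 0 ≤ A) (hs : s ∈ Icc 1 2) :
    ∫ u, (A + |u|) * gammaWeight (1 / 2) s u ≤ 4 * A + 18 := by
  have hconv := convexOn_integral_add_abs_mul_gammaWeight hA one_half_pos
  refine (hconv.le_max_of_mem_Icc (mem_Ioi.2 one_pos) (mem_Ioi.2 two_pos) hs).trans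
    (max_le ?_ ?_)
  · refine (integral_add_abs_mul_gammaWeight_le A one_half_pos one_pos).trans ?_
    have hG₁ := Gamma_le_one_div (s := 1 / 2) (by norm_num) (by norm_num)
    have hG₃ := Gamma_le_one_of_mem_Icc (s := 3 / 2) ⟨by norm_num, by norm_num⟩
    have hp₁ : (2 : ℝ) ^ (1 / 2 : ℝ) ≤ 3 / 2 := by
      rw [← sqrt_eq_rpow, sqrt_le_left (by norm_num)]
      norm_num
    have hp₃ : (2 : ℝ) ^ (3 / 2 : ℝ) ≤ 3 := by
      rw [show (3 / 2 : ℝ) = 1 + 1 / 2 by norm_num, rpow_add two_pos, rpow_one]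
      linarith
    norm_num at hG₁ hG₃ hp₁ hp₃ ⊢
    have := mul_le_mul hp₃ hG₃ (Gamma_pos_of_pos (by norm_num)).le (by norm_num)
    have := mul_le_mul hp₁ hG₁ (Gamma_pos_of_pos (by norm_num)).le (by norm_num)
    linarith
  · refine (integral_add_abs_mul_gammaWeight_le A one_half_pos two_pos).trans ?_
    have hG₃ : Gamma 3 = 2 := by norm_num [Gamma_ofNat_eq_factorial]
    norm_num [hG₃]
    linarith

lemma norm_integral_derivKernel_two_pi_div_three_le (hρ : ρ ∈ Icc (1 / 2) 1) (hx : 0 < x) (T : ℝ) :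
    ‖∫ u : ℝ, hankelIntegrand (derivKernel ρ x T) (u + (2 * π / 3 : ℝ) * I)‖ ≤
      5 / 2 / x ^ 2 * (4 * (|T| + 2 * π / 3) + 18) := by
  obtain ⟨hρ₀, hρ₁⟩ := hρ
  have hφ : 2 * π / 3 ∈ Icc 0 π := ⟨by positivity, by linarith [pi_pos]⟩
  have hangle : 2 * π / 3 = π - π / 3 := by ring
  have hcos : -Real.cos (2 * π / 3) = 1 / 2 := by
    rw [hangle, Real.cos_pi_sub, neg_neg, Real.cos_pi_div_three]
  have hsin : Real.sin (2 * π / 3) = √3 / 2 := by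
    rw [hangle, Real.sin_pi_sub, Real.sin_pi_div_three]
  have hδ : 1 / (√3 / 2) + 1 / (√3 / 2) ^ 2 ≤ 5 / 2 := by
    have h : 12 / 7 ≤ √3 := le_sqrt_of_sq_le (by norm_num)
    have : 2 / √3 ≤ 7 / 6 := by rw [div_le_div_iff₀ (by positivity) (by norm_num)]; linarith
    rw [div_pow, sq_sqrt (by norm_num), one_div_div]
    linarith
  have hbound (u : ℝ) :
      ‖hankelIntegrand (derivKernel ρ x T) (u + (2 * π / 3 : ℝ) * I)‖ ≤
        5 / 2 / x ^ 2 * ((|T| + 2 * π / 3 + |u|) * gammaWeight (1 / 2) (2 * ρ) u) := by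
    rw [← hcos]
    refine (norm_hankelIntegrand_derivKernel_le (δ := √3 / 2) hx (by positivity) hφ T u ?_).trans ?_
    · rw [← hsin]
      exact sin_le_norm_one_add_scaledPow (by linarith) hx.le (by rw [im_add_mul_I]; exact hφ.1)
        (by rw [im_add_mul_I]; exact mul_le_of_le_one_left hφ.1 hρ₁) hφ.2
    · have := (gammaWeight_pos (-Real.cos (2 * π / 3)) (2 * ρ) u).le
      have := hφ.1
      gcongr
  refine (norm_integral_le_of_norm_le ((integrable_add_abs_mul_gammaWeight _ one_half_pos
    (by linarith)).const_mul _) (.of_forall hbound)).trans ?_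
  rw [integral_const_mul]
  gcongr
  exact integral_add_abs_mul_gammaWeight_half_le (add_nonneg (abs_nonneg T) hφ.1)
    ⟨by linarith, by linarith⟩

lemma exists_abs_im_integral_derivKernel_le (hρ : ρ ∈ Ioo 0 1) (hx : 0 < x) (T : ℝ) :
    ∃ φ ∈ Ioc (π / 2) π,
      |(∫ u : ℝ, hankelIntegrand (derivKernel ρ x T) (u + φ * I)).im| ≤
        π * (1 + ρ) / (2 * x ^ 2) * (22 / ρ + 4.5 * |T|) := by
  have hT := abs_nonneg T
  have hπ := pi_gt_d2
  have hρ₀ := hρ.1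
  rcases le_total ρ (1 / 2) with h | h
  · refine ⟨π, pi_mem_Ioc,
      (abs_im_integral_derivKernel_pi_le ⟨hρ.1, h⟩ hx T).trans ?_⟩
    have : 2 * |T| + 23 / (3 * ρ) ≤ (1 + ρ) / 2 * (22 / ρ + 4.5 * |T|) := by
      calc 2 * |T| + 23 / (3 * ρ) = 2 * |T| + 23 / 3 * (1 / ρ) := by ring
        _ ≤ 1 / 2 * (22 * (1 / ρ) + 4.5 * |T|) := by linarith [one_div_pos.2 hρ₀]
        _ = 1 / 2 * (22 / ρ + 4.5 * |T|) := by rw [mul_one_div]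
        _ ≤ (1 + ρ) / 2 * (22 / ρ + 4.5 * |T|) := by gcongr; linarith
    calc _ ≤ π / x ^ 2 * ((1 + ρ) / 2 * (22 / ρ + 4.5 * |T|)) := by gcongr
      _ = _ := by ring
  · refine ⟨2 * π / 3, ⟨by linarith, by linarith⟩, (Complex.abs_im_le_norm _).trans
      ((norm_integral_derivKernel_two_pi_div_three_le ⟨h, hρ.2.le⟩ hx T).trans ?_)⟩
    have : 5 / 2 * (4 * (|T| + 2 * π / 3) + 18) ≤ π * (1 + ρ) / 2 * (22 / ρ + 4.5 * |T|) := by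
      calc 5 / 2 * (4 * (|T| + 2 * π / 3) + 18) ≤ π * (22 + 3 / 4 * (4.5 * |T|)) := by nlinarith
        _ ≤ π * ((1 + ρ) / 2 * (22 / ρ) + (1 + ρ) / 2 * (4.5 * |T|)) := by
          gcongr ?_ * (?_ + ?_ * _)
          · field_simp
            linarith [hρ.2]
          · linarith
        _ = π * (1 + ρ) / 2 * (22 / ρ + 4.5 * |T|) := by ring
    calc 5 / 2 / x ^ 2 * (4 * (|T| + 2 * π / 3) + 18)
        = 1 / x ^ 2 * (5 / 2 * (4 * (|T| + 2 * π / 3) + 18)) := by ring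
      _ ≤ 1 / x ^ 2 * (π * (1 + ρ) / 2 * (22 / ρ + 4.5 * |T|)) := by gcongr
      _ = _ := by ring

theorem exists_neg_hasDerivAt_mittagLeffler (hρ : ρ ∈ Ioo 0 1) {lam t : ℝ} (hlam : 0 < lam)
    (ht : 1 ≤ t) (h : 22 / ρ + 4.5 * Real.log t < lam * t ^ ρ) :
    ∃ D < 0, HasDerivAt (fun r : ℝ => mittagLeffler r (-(lam * t ^ r))) D ρ := by
  have ht₀ : 0 < t := one_pos.trans_le ht
  have hx (r : ℝ) : 0 < lam * t ^ r := mul_pos hlam (rpow_pos_of_pos ht₀ r)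
  obtain ⟨φ, hφ, hremainder⟩ := exists_abs_im_integral_derivKernel_le hρ (hx ρ) (Real.log t)
  have hrep : ∀ᶠ r in 𝓝 ρ, mittagLeffler r (-(lam * t ^ r)) =
      1 / (lam * t ^ r * Gamma (1 - r)) + 1 / π *
        (∫ u : ℝ, hankelIntegrand (remainderKernel r (lam * t ^ r)) (u + φ * I)).im := by
    filter_upwards [Ioo_mem_nhds hρ.1 hρ.2] with r hr
    exact mittagLeffler_neg_eq_add_integral hr (hx r) hφ
  have him := Complex.imCLM.hasFDerivAt.comp_hasDerivAt ρ
    (hasDerivAt_integral_remainderKernel hρ hlam ht₀ hφ)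
  refine ⟨_, ?_, ((hasDerivAt_inv_mul_Gamma hρ.2 hlam.ne' ht₀).add
    (him.const_mul (1 / π))).congr_of_eventuallyEq hrep⟩
  have hleading := neg_div_mul_Gamma_two_sub_le hρ.1.le hρ.2 (hx ρ) ht
  set x := lam * t ^ ρ
  have hlt : 1 / π * (∫ u : ℝ, hankelIntegrand (derivKernel ρ x (Real.log t)) (u + φ * I)).im <
      (1 + ρ) / (2 * x) := by
    rw [abs_of_nonneg (Real.log_nonneg ht)] at hremainder
    have := hx ρ
    have := hρ.1
    calc _ ≤ 1 / π * (π * (1 + ρ) / (2 * x ^ 2) * (22 / ρ + 4.5 * Real.log t)) := by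
          gcongr
          exact (le_abs_self _).trans hremainder
      _ < 1 / π * (π * (1 + ρ) / (2 * x ^ 2) * x) := by gcongr
      _ = (1 + ρ) / (2 * x) := by field_simp
  exact (add_lt_add_of_le_of_lt hleading hlt).trans_eq (neg_add_cancel _)

end Estimates

end MittagLeffler

theorem stmt6_general (ρ₀ lam₀ t₀ : ℝ) (hρ₀ : 0 < ρ₀) (hlam₀ : 0 < lam₀) (ht₀ : 1 ≤ t₀)
    (ht₀' : (22 / ρ₀ + 4.5 * Real.log t₀) / lam₀ < t₀ ^ ρ₀) :
    ∀ lam : ℝ, lam₀ ≤ lam →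
      (∀ ρ ∈ Set.Ico ρ₀ 1,
        deriv (fun ρ : ℝ => mittagLeffler ρ (-(lam * t₀ ^ ρ))) ρ < 0) ∧
      StrictAntiOn (fun ρ : ℝ => mittagLeffler ρ (-(lam * t₀ ^ ρ))) (Set.Ico ρ₀ 1) := by
  intro lam hlam
  have hderiv (ρ : ℝ) (hρ : ρ ∈ Ico ρ₀ 1) :
      ∃ D < 0, HasDerivAt (fun r : ℝ => mittagLeffler r (-(lam * t₀ ^ r))) D ρ := by
    refine MittagLeffler.exists_neg_hasDerivAt_mittagLeffler ⟨hρ₀.trans_le hρ.1, hρ.2⟩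
      (hlam₀.trans_le hlam) ht₀ ?_
    calc 22 / ρ + 4.5 * Real.log t₀ ≤ 22 / ρ₀ + 4.5 * Real.log t₀ := by gcongr; exact hρ.1
      _ < lam₀ * t₀ ^ ρ₀ := (div_lt_iff₀' hlam₀).1 ht₀'
      _ ≤ lam * t₀ ^ ρ := mul_le_mul hlam (rpow_le_rpow_of_exponent_le ht₀ hρ.1)
        (rpow_nonneg (by linarith) ρ₀) (hlam₀.le.trans hlam)
  have hneg : ∀ ρ ∈ Ico ρ₀ 1, deriv (fun r : ℝ => mittagLeffler r (-(lam * t₀ ^ r))) ρ < 0 :=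
    fun ρ hρ => by
      obtain ⟨D, hD, hasD⟩ := hderiv ρ hρ
      rwa [hasD.deriv]
  refine ⟨hneg, strictAntiOn_of_deriv_neg (convex_Ico ρ₀ 1) (fun ρ hρ => ?_) fun ρ hρ =>
    hneg ρ (interior_subset hρ)⟩
  obtain ⟨D, -, hasD⟩ := hderiv ρ hρ
  exact hasD.continuousAt.continuousWithinAt

/-- With `B₁ = 43`, `B₂ = 4.6`: if `t₀ ≥ 2` and `t₀^{ρ₀} > (B₁/ρ₀ + B₂ ln t₀)/λ₀`, then for
every `λ ≥ λ₀` and `ρ ∈ [ρ₀, 1)` the derivative in `ρ` of `ρ ↦ E_ρ(−λ t₀^ρ)` is negative;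
consequently this function is strictly decreasing on `[ρ₀, 1)`. -/
theorem stmt6 (ρ₀ lam₀ t₀ : ℝ) (hρ₀ : 0 < ρ₀) (hρ₀' : ρ₀ < 1) (hlam₀ : 0 < lam₀)
    (ht₀ : 2 ≤ t₀) (ht₀' : (43 / ρ₀ + 4.6 * Real.log t₀) / lam₀ < t₀ ^ ρ₀) :
    ∀ lam : ℝ, lam₀ ≤ lam →
      (∀ ρ ∈ Set.Ico ρ₀ 1,
        deriv (fun ρ : ℝ => mittagLeffler ρ (-(lam * t₀ ^ ρ))) ρ < 0) ∧
      StrictAntiOn (fun ρ : ℝ => mittagLeffler ρ (-(lam * t₀ ^ ρ))) (Set.Ico ρ₀ 1) := by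
  have hlog : 0 ≤ Real.log t₀ := Real.log_nonneg (by linarith)
  exact stmt6_general ρ₀ lam₀ t₀ hρ₀ hlam₀ (by linarith)
    (lt_of_le_of_lt (by gcongr <;> norm_num) ht₀')
end
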